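/- For every n ≥ 5, the automorphism group Aut(F_n) and the outer automorphism group Out(F_n) of the free group F_n of rank n are finitely generated and self-simulable, where Out(F_n) is the quotient of Aut(F_n) by the normal subgroup of inner automorphisms. -/

import Mathlib

open scoped Pointwise

namespace SelfSim

/-- The left shift action of a group `G` on the full shift `G → A`:
`(g · x)(h) = x (g⁻¹ h)`. -/
def shift {G A : Type*} [Group G] (g : G) (x : G → A) : G → A := fun h => x (g⁻¹ * h)

/-- A `G`-subshift: a closed, shift-invariant subset of the full shift `G → A`
(`A` carrying its topology, `G → A` the product topology). -/
def IsSubshift {G A : Type*} [Group G] [TopologicalSpace A] (X : Set (G → A)) : Prop :=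
  IsClosed X ∧ ∀ (g : G) (x : G → A), x ∈ X → shift g x ∈ X

/-- A subshift of finite type: there are a finite set `F ⊆ G` and a set `𝓛` of patterns
on `F` such that `x ∈ X` iff every translate of `x` restricted to `F` lies in `𝓛`. -/
def IsSFT {G A : Type*} [Group G] (X : Set (G → A)) : Prop :=
  ∃ (F : Finset G) (L : Set (↥F → A)),
    ∀ x : G → A, x ∈ X ↔ ∀ g : G, (fun h : ↥F => x (g * (h : G))) ∈ L

/-- `φ` is a topological factor map from the shift action on `Z ⊆ G → A` onto the
action `act` of `G` on `Y ⊆ β`: continuous on `Z`, mapping `Z` into and onto `Y`,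
and equivariant. -/
def IsFactorMapOnto {G A β : Type*} [Group G] [TopologicalSpace A] [TopologicalSpace β]
    (Z : Set (G → A)) (φ : (G → A) → β) (act : G → β → β) (Y : Set β) : Prop :=
  ContinuousOn φ Z ∧ Set.MapsTo φ Z Y ∧ Set.SurjOn φ Z Y ∧
    ∀ (g : G) (x : G → A), x ∈ Z → φ (shift g x) = act g (φ x)

/-- A sofic subshift: a topological factor of some subshift of finite type
(over some finite alphabet, which we may take to be `Fin k`). -/
def IsSofic {G A : Type*} [Group G] [TopologicalSpace A] (Y : Set (G → A)) : Prop :=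
  ∃ (k : ℕ) (Z : Set (G → Fin k)) (φ : (G → Fin k) → (G → A)),
    IsSFT Z ∧ IsFactorMapOnto Z φ shift Y

/-- Recursively enumerable predicate. -/
def RE {α : Type*} [Primcodable α] (p : α → Prop) : Prop :=
  Partrec fun a => Part.assert (p a) fun _ => Part.some ()

/-- `x : ℕ → A` begins with the finite word `w`. -/
def ExtendsWord {A : Type*} (x : ℕ → A) (w : List A) : Prop :=
  ∀ i : Fin w.length, x i = w.get i

/-- A closed subset `Z ⊆ A^ℕ` is effectively closed if the set of words whose
cylinder is disjoint from `Z` is recursively enumerable. -/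
def EffectivelyClosedSet {A : Type*} [Primcodable A] [TopologicalSpace A]
    (Z : Set (ℕ → A)) : Prop :=
  IsClosed Z ∧ RE fun w : List A => ∀ x : ℕ → A, ExtendsWord x w → x ∉ Z

/-- `act` defines an action of `G` on the set `X ⊆ β`. -/
def IsActionOn {G β : Type*} [Group G] (act : G → β → β) (X : Set β) : Prop :=
  (∀ g : G, Set.MapsTo (act g) X X) ∧ (∀ x ∈ X, act 1 x = x) ∧
    ∀ (g h : G) (x : β), x ∈ X → act (g * h) x = act g (act h x)

/-- The set representation of the action `act` of `G` on `X ⊆ A^ℕ` with respect to the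
finite generating tuple `s : Fin m → G` (playing the role of the generating set `S`):
the set of `y ∈ (A^S)^ℕ` of the form `y(n)(s) = (s · x)(n)` for some `x ∈ X`. -/
def SetRep {G A : Type*} [Group G] {m : ℕ} (s : Fin m → G)
    (act : G → (ℕ → A) → ℕ → A) (X : Set (ℕ → A)) : Set (ℕ → (Fin m → A)) :=
  {y | ∃ x ∈ X, ∀ i : Fin m, (fun n => y n i) = act (s i) x}

/-- The action `act` of `G` on the closed set `X ⊆ A^ℕ` is effectively closed with respect
to the finite generating tuple `s` (which contains `1` and generates `G` as a monoid):
its set representation is an effectively closed subset of `(A^S)^ℕ`. -/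
def IsEffClosedActionWith {G A : Type*} [Group G] [Primcodable A] [TopologicalSpace A]
    {m : ℕ} (s : Fin m → G) (act : G → (ℕ → A) → ℕ → A) (X : Set (ℕ → A)) : Prop :=
  IsClosed X ∧ IsActionOn act X ∧ (∃ i, s i = 1) ∧
    Submonoid.closure (Set.range s) = ⊤ ∧
    EffectivelyClosedSet (SetRep s act X)

/-- The action `act` of `G` on `X ⊆ A^ℕ` is effectively closed (with respect to some
finite generating set containing `1`). -/
def IsEffClosedAction {G A : Type*} [Group G] [Primcodable A] [TopologicalSpace A]
    (act : G → (ℕ → A) → ℕ → A) (X : Set (ℕ → A)) : Prop :=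
  ∃ (m : ℕ) (s : Fin m → G), IsEffClosedActionWith s act X

/-- The action `act` of `G` on `X ⊆ A^ℕ` is a topological factor of some `G`-subshift
of finite type. -/
def IsFactorOfSFT {G A : Type*} [Group G] [TopologicalSpace A]
    (act : G → (ℕ → A) → ℕ → A) (X : Set (ℕ → A)) : Prop :=
  ∃ (k : ℕ) (Z : Set (G → Fin k)) (φ : (G → Fin k) → (ℕ → A)),
    IsSFT Z ∧ IsFactorMapOnto Z φ act X

/-- A group `G` is (dynamically) self-simulable if every effectively closed action of `G`
on a closed subset of `{0,1}^ℕ` is a topological factor of a `G`-subshift of finite type. -/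
def SelfSimulable (G : Type*) [Group G] : Prop :=
  ∀ (X : Set (ℕ → Bool)) (act : G → (ℕ → Bool) → ℕ → Bool),
    IsEffClosedAction act X → IsFactorOfSFT act X

/-- Amenability via the Følner condition: for every finite `K` and `δ > 0` there is a
nonempty finite `F` with `|KF △ F| ≤ δ |F|`. -/
def Amenable (G : Type*) [Group G] : Prop :=
  ∀ K : Set G, K.Finite → ∀ δ : ℝ, 0 < δ →
    ∃ F : Set G, F.Finite ∧ F.Nonempty ∧
      ((symmDiff (K * F) F).ncard : ℝ) ≤ δ * F.ncard

/-- A finitely generated group is recursively presented: for some finite tuple generating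
`G` as a monoid, the set of words evaluating to the identity is recursively enumerable. -/
def RecursivelyPresented (G : Type*) [Group G] : Prop :=
  ∃ (m : ℕ) (s : Fin m → G), Submonoid.closure (Set.range s) = ⊤ ∧
    RE fun w : List (Fin m) => (w.map s).prod = 1

/-- A finitely generated group has decidable word problem: for some finite tuple generating
`G` as a monoid, the set of words evaluating to the identity is decidable. -/
def DecidableWordProblem (G : Type*) [Group G] : Prop :=
  ∃ (m : ℕ) (s : Fin m → G), Submonoid.closure (Set.range s) = ⊤ ∧
    ComputablePred fun w : List (Fin m) => (w.map s).prod = 1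

/-- A pattern coding `c` (a finite list of pairs (word over the generators, letter))
holds in the configuration `x` at position `g`: `x (g ⬝ w̲) = a` for every pair `(w, a)`
of `c`. This says exactly that `x ∈ g·[c]`. -/
def PCHolds {G A : Type*} [Group G] {m : ℕ} (s : Fin m → G) (x : G → A) (g : G)
    (c : List (List (Fin m) × A)) : Prop :=
  ∀ p ∈ c, x (g * (p.1.map s).prod) = p.2

/-- A `G`-subshift `X ⊆ A^G` is effectively closed by patterns: for some finite generating
tuple `s`, there is a recursively enumerable set `𝒞` of pattern codings such that `X` is the
set of configurations avoiding every translate of every cylinder `[c]`, `c ∈ 𝒞`. -/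
def EffClosedByPatterns {G A : Type*} [Group G] [Primcodable A] (X : Set (G → A)) : Prop :=
  ∃ (m : ℕ) (s : Fin m → G), Submonoid.closure (Set.range s) = ⊤ ∧
    ∃ 𝒞 : Set (List (List (Fin m) × A)), RE (· ∈ 𝒞) ∧
      X = {x : G → A | ∀ (g : G) (c : List (List (Fin m) × A)), c ∈ 𝒞 → ¬ PCHolds s x g c}

/-- Word metric distance associated to a finite tuple `s` generating `G` as a monoid. -/
noncomputable def wordDist {G : Type*} [Group G] {m : ℕ} (s : Fin m → G) (g h : G) : ℕ :=
  sInf {n : ℕ | ∃ w : List (Fin m), w.length = n ∧ (w.map s).prod = g⁻¹ * h}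

/-- Two finitely generated groups are quasi-isometric (with respect to word metrics given
by some finite generating sets). -/
def QuasiIsometric (G₁ G₂ : Type*) [Group G₁] [Group G₂] : Prop :=
  ∃ (m₁ : ℕ) (s₁ : Fin m₁ → G₁) (m₂ : ℕ) (s₂ : Fin m₂ → G₂),
    Submonoid.closure (Set.range s₁) = ⊤ ∧ Submonoid.closure (Set.range s₂) = ⊤ ∧
    ∃ (f : G₂ → G₁) (A B C : ℝ), 1 ≤ A ∧ 0 ≤ B ∧ 0 ≤ C ∧
      (∀ x y : G₂,
        (1 / A) * (wordDist s₂ x y : ℝ) - B ≤ (wordDist s₁ (f x) (f y) : ℝ) ∧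
        (wordDist s₁ (f x) (f y) : ℝ) ≤ A * (wordDist s₂ x y : ℝ) + B) ∧
      ∀ z : G₁, ∃ x : G₂, (wordDist s₁ z (f x) : ℝ) ≤ C

/-- A finitely presented group: a quotient of a finitely generated free group by the
normal closure of finitely many relators. -/
def FinitelyPresentedGroup (G : Type*) [Group G] : Prop :=
  ∃ (m : ℕ) (f : FreeGroup (Fin m) →* G) (R : Finset (FreeGroup (Fin m))),
    Function.Surjective f ∧ f.ker = Subgroup.normalClosure (R : Set (FreeGroup (Fin m)))

/-- A subgroup `Δ ≤ G` is mediated: there is a finite generating set `T` of `G` such that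
`Δ ∩ tΔt⁻¹` is non-amenable for every `t ∈ T`. -/
def Mediated {G : Type*} [Group G] (Δ : Subgroup G) : Prop :=
  ∃ T : Finset G, Subgroup.closure (T : Set G) = ⊤ ∧
    ∀ t ∈ T, ¬ Amenable ↥(Δ ⊓ Subgroup.map (MulAut.conj t).toMonoidHom Δ)

end SelfSim

namespace SelfSim

/-- The inner automorphisms form a normal subgroup of `MulAut G`. -/
instance conj_range_normal (G : Type*) [Group G] :
    (MulAut.conj : G →* MulAut G).range.Normal := by
  constructor
  intro x hx φ
  obtain ⟨g, rfl⟩ := hx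
  refine ⟨φ g, ?_⟩
  ext y
  simp [MulAut.conj_apply, MulAut.mul_apply, map_mul, map_inv]

end SelfSim

namespace SelfSim

/-- Validity of a tiling of the quarter plane (time, column). -/
def ValidTiling {Θ Λ : Type} (Sq : Θ → Θ → Θ → Θ → Prop) (Col : Θ → Θ → Prop)
    (Init : Λ → Θ → Prop) (inp : ℕ → Λ) (θ : ℕ → ℕ → Θ) : Prop :=
  (∀ t k, Sq (θ t k) (θ t (k+1)) (θ (t+1) k) (θ (t+1) (k+1))) ∧
  (∀ t, Col (θ t 0) (θ (t+1) 0)) ∧ ∀ k, Init (inp k) (θ 0 k)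

/-- Action of a stack operation on a stack: `none` keeps, `some none` pops,
`some (some γ)` pushes `γ`. -/
def opApply {Γ : Type} : Option (Option Γ) → (ℕ → Option Γ) → ℕ → Option Γ
  | none, S => S
  | some none, S => fun n => S (n+1)
  | some (some γ), S => fun n => match n with
    | 0 => some γ
    | n+1 => S n

/-- An infinite run of a stack machine. -/
def IsRun {Q K Γ : Type} (nxt : Q → (K → Option Γ) → Option Q)
    (op : Q → K → Option (Option Γ)) (c : ℕ → Q × (K → ℕ → Option Γ)) : Prop :=
  ∀ t, nxt (c t).1 (fun k => (c t).2 k 0) = some (c (t+1)).1 ∧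
    ∀ k, (c (t+1)).2 k = opApply (op (c t).1 k) ((c t).2 k)

/-- square relation for one stack -/
def sqRel {Γ : Type} {r : ℕ} (o : Option (Option Γ)) (a b c d : Fin r → Option Γ) : Prop :=
  match o with
  | none => c = a
  | some none => (∀ i j : Fin r, j.val = i.val + 1 → c i = a j) ∧
      (∀ i j : Fin r, i.val + 1 = r → j.val = 0 → c i = b j)
  | some (some _) => (∀ i j : Fin r, j.val = i.val + 1 → d j = b i) ∧
      (∀ i j : Fin r, i.val + 1 = r → j.val = 0 → d j = a i)

/-- column relation for one stack -/
def colRel {Γ : Type} {r : ℕ} (o : Option (Option Γ)) (a c : Fin r → Option Γ) : Prop :=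
  match o with
  | none => True
  | some none => True
  | some (some γ) => (∀ i j : Fin r, j.val = i.val + 1 → c j = a i) ∧
      (∀ j : Fin r, j.val = 0 → c j = some γ)

/-- the stack content stored in a row of blocks -/
def unblock {Γ : Type} {r : ℕ} (hr : 0 < r) (f : ℕ → Fin r → Option Γ) : ℕ → Option Γ :=
  fun n => f (n / r) ⟨n % r, Nat.mod_lt _ hr⟩

theorem unblock_apply {Γ : Type} {r : ℕ} (hr : 0 < r) (f : ℕ → Fin r → Option Γ)
    (k : ℕ) (i : Fin r) : unblock hr f (r * k + i) = f k i := by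
  unfold unblock
  have h1 : (r * k + i) / r = k := by
    rw [Nat.mul_add_div hr, Nat.div_eq_of_lt i.2]; rfl
  have h2 : (r * k + i) % r = i := by
    rw [Nat.mul_add_mod, Nat.mod_eq_of_lt i.2]
  have h3 : (⟨(r * k + i) % r, Nat.mod_lt _ hr⟩ : Fin r) = i := Fin.ext h2
  rw [h3, h1]

theorem exists_block {r : ℕ} (hr : 0 < r) (n : ℕ) : ∃ (k : ℕ) (i : Fin r), n = r * k + i :=
  ⟨n / r, ⟨n % r, Nat.mod_lt _ hr⟩, (Nat.div_add_mod n r).symm⟩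

theorem block_op {Γ : Type} {r : ℕ} (hr : 0 < r) (o : Option (Option Γ))
    (f g : ℕ → Fin r → Option Γ) :
    ((∀ k, sqRel o (f k) (f (k+1)) (g k) (g (k+1))) ∧ colRel o (f 0) (g 0)) ↔
      unblock hr g = opApply o (unblock hr f) := by
  have hlast : ∀ i : Fin r, ¬ (i.val + 1 < r) → i.val + 1 = r := fun i h => by omega
  have hz : ∀ (k : ℕ) (h : ℕ → Fin r → Option Γ), unblock hr h (r * k) = h k ⟨0, hr⟩ := by
    intro k h
    simpa using unblock_apply hr h k ⟨0, hr⟩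
  constructor
  · rintro ⟨h1, h2⟩
    funext n
    rcases o with _ | _ | γ
    · obtain ⟨k, i, rfl⟩ := exists_block hr n
      have := h1 k
      simp only [sqRel] at this
      simp only [opApply, unblock_apply, this]
    · obtain ⟨k, i, rfl⟩ := exists_block hr n
      have := h1 k
      simp only [sqRel] at this
      simp only [opApply, unblock_apply]
      by_cases hi : i.val + 1 < r
      · rw [this.1 i ⟨i.val+1, hi⟩ rfl]
        exact (unblock_apply hr f k ⟨i.val+1, hi⟩).symm
      · have hi' := hlast i hi
        rw [this.2 i ⟨0, hr⟩ hi' rfl, ← hz (k+1) f]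
        congr 1
        rw [mul_add, add_assoc, hi', mul_one]
    · simp only [sqRel, colRel] at h1 h2
      cases n with
      | zero =>
        simp only [opApply]
        have := hz 0 g
        rw [mul_zero] at this
        rw [this, h2.2 _ rfl]
      | succ n =>
        simp only [opApply]
        obtain ⟨k, i, rfl⟩ := exists_block hr n
        rw [unblock_apply]
        by_cases hi : i.val + 1 < r
        · have e := unblock_apply hr g k ⟨i.val+1, hi⟩
          have e' : r * k + i.val + 1 = r * k + (⟨i.val+1, hi⟩ : Fin r).val := by
            simp only; omega
          rw [e', e]
          cases k with
          | zero => exact h2.1 i _ rfl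
          | succ k => exact (h1 k).1 i _ rfl
        · have hi' := hlast i hi
          have e : r * k + i.val + 1 = r * (k+1) := by rw [mul_add, add_assoc, hi', mul_one]
          rw [e, hz, (h1 k).2 i ⟨0, hr⟩ hi' rfl]
  · intro h
    have hg : ∀ k i, g k i = opApply o (unblock hr f) (r * k + i) := by
      intro k i; rw [← h, unblock_apply]
    rcases o with _ | _ | γ
    · refine ⟨fun k => ?_, trivial⟩
      funext i
      rw [hg]; simp only [opApply, unblock_apply]
    · refine ⟨fun k => ⟨fun i j hij => ?_, fun i j hi hj => ?_⟩, trivial⟩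
      · rw [hg]; simp only [opApply]
        rw [← unblock_apply hr f k j, hij]; rfl
      · rw [hg]; simp only [opApply]
        rw [← unblock_apply hr f (k+1) j, hj]
        congr 1
        rw [mul_add, add_assoc, hi, mul_one]; rfl
    · refine ⟨fun k => ⟨fun i j hij => ?_, fun i j hi hj => ?_⟩, ⟨fun i j hij => ?_, fun j hj => ?_⟩⟩
      · rw [hg, hij, ← add_assoc]; simp only [opApply, unblock_apply]
      · rw [hg, hj, ← unblock_apply hr f k i]
        have : r * (k+1) + 0 = (r * k + i) + 1 := by rw [mul_add, mul_one]; omega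
        rw [this]; simp only [opApply]
      · rw [hg, hij, ← add_assoc]; simp only [opApply, unblock_apply]
      · rw [hg, hj]; simp only [opApply, mul_zero, add_zero]

theorem stack_tile {Q K Γ Λ : Type} [Finite K] [Finite Γ]
    (nxt : Q → (K → Option Γ) → Option Q)
    (op : Q → K → Option (Option Γ)) (S : Set Q) (hS : S.Finite)
    (hcl : ∀ q ∈ S, ∀ tp q', nxt q tp = some q' → q' ∈ S)
    (q0 : Q) (hq0 : q0 ∈ S) (r : ℕ) (hr : 0 < r) (ini : Λ → K → Fin r → Option Γ) :
    ∃ (Θ : Type) (_ : Finite Θ) (Sq : Θ → Θ → Θ → Θ → Prop) (Col : Θ → Θ → Prop)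
      (Init : Λ → Θ → Prop), ∀ inp : ℕ → Λ,
      (∃ θ, ValidTiling Sq Col Init inp θ) ↔
      ∃ c, IsRun nxt op c ∧ c 0 = (q0, fun k => unblock hr (fun n => ini (inp n) k)) := by
  have : Finite S := hS
  refine ⟨S × (K → Option Γ) × (K → Fin r → Option Γ), inferInstance,
    fun a b c d => a.1 = b.1 ∧ a.2.1 = b.2.1 ∧
      ∀ k, sqRel (op a.1 k) (a.2.2 k) (b.2.2 k) (c.2.2 k) (d.2.2 k),
    fun a c => (∀ k, a.2.1 k = a.2.2 k ⟨0, hr⟩) ∧ nxt a.1 a.2.1 = some (c.1 : Q) ∧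
      ∀ k, colRel (op a.1 k) (a.2.2 k) (c.2.2 k),
    fun l a => (a.1 : Q) = q0 ∧ a.2.2 = ini l, fun inp => ⟨?_, ?_⟩⟩
  · rintro ⟨θ, hsq, hcol, hini⟩
    have hb : ∀ t k, (θ t k).1 = (θ t 0).1 ∧ (θ t k).2.1 = (θ t 0).2.1 := by
      intro t k
      induction k with
      | zero => exact ⟨rfl, rfl⟩
      | succ k ih => exact ⟨(hsq t k).1.symm.trans ih.1, (hsq t k).2.1.symm.trans ih.2⟩
    refine ⟨fun t => ((θ t 0).1, fun k => unblock hr (fun n => (θ t n).2.2 k)), ?_, ?_⟩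
    · intro t
      have h1 : ∀ k, unblock hr (fun n => (θ t n).2.2 k) 0 = (θ t 0).2.1 k := by
        intro k
        have := unblock_apply hr (fun n => (θ t n).2.2 k) 0 ⟨0, hr⟩
        simp only [mul_zero, add_zero] at this
        rw [this, (hcol t).1 k]
      refine ⟨?_, fun k => ?_⟩
      · simp only [h1]
        exact (hcol t).2.1
      · refine (block_op hr _ (fun n => (θ t n).2.2 k) (fun n => (θ (t+1) n).2.2 k)).1 ⟨fun n => ?_, (hcol t).2.2 k⟩
        have := (hsq t n).2.2 k
        rw [(hb t n).1] at this
        exact this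
    · refine Prod.ext (hini 0).1 ?_
      funext k
      simp only
      congr 1
      funext n
      rw [(hini n).2]
  · rintro ⟨c, hrun, h0⟩
    have hmem : ∀ t, (c t).1 ∈ S := by
      intro t
      induction t with
      | zero => rw [h0]; exact hq0
      | succ t ih => exact hcl _ ih _ _ (hrun t).1
    let blk : ℕ → ℕ → K → Fin r → Option Γ := fun t n k i => (c t).2 k (r * n + i)
    have hblk : ∀ t k, unblock hr (fun n => blk t n k) = (c t).2 k := by
      intro t k
      funext n
      obtain ⟨k, i, rfl⟩ := exists_block hr n
      rw [unblock_apply]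
    have hop : ∀ t k, _ := fun t k => (block_op hr (op (c t).1 k) (fun n => blk t n k)
      (fun n => blk (t+1) n k)).2 (by rw [hblk, hblk]; exact (hrun t).2 k)
    refine ⟨fun t n => (⟨(c t).1, hmem t⟩, fun k => (c t).2 k 0, blk t n), ?_, ?_, ?_⟩
    · exact fun t n => ⟨rfl, rfl, fun k => (hop t k).1 n⟩
    · exact fun t => ⟨fun k => by simp [blk], (hrun t).1, fun k => (hop t k).2⟩
    · intro n
      refine ⟨by simp [h0], ?_⟩
      funext k i
      simp only [blk, h0]
      rw [unblock_apply]

end SelfSim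

namespace SelfSim
open Turing StateTransition

section Micro
variable {K Γ Λ σ : Type} [DecidableEq K]

/-- control part of a micro step of a TM2 machine -/
def microNxt (M : Λ → TM2.Stmt (fun _ : K => Γ) Λ σ) :
    TM2.Stmt (fun _ : K => Γ) Λ σ × σ → (K → Option Γ) →
      Option (TM2.Stmt (fun _ : K => Γ) Λ σ × σ)
  | (TM2.Stmt.push _ _ q, v), _ => some (q, v)
  | (TM2.Stmt.peek k f q, v), tp => some (q, f v (tp k))
  | (TM2.Stmt.pop k f q, v), tp => some (q, f v (tp k))
  | (TM2.Stmt.load f q, v), _ => some (q, f v)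
  | (TM2.Stmt.branch f q₁ q₂, v), _ => some (cond (f v) q₁ q₂, v)
  | (TM2.Stmt.goto f, v), _ => some (M (f v), v)
  | (TM2.Stmt.halt, _), _ => none

/-- stack operations of a micro step of a TM2 machine -/
def microOp : TM2.Stmt (fun _ : K => Γ) Λ σ × σ → K → Option (Option Γ)
  | (TM2.Stmt.push k f _, v) => fun k' => if k' = k then some (some (f v)) else none
  | (TM2.Stmt.pop k _ _, _) => fun k' => if k' = k then some none else none
  | _ => fun _ => none

/-- list version of the stack operation -/
def opList : Option (Option Γ) → List Γ → List Γ
  | none, S => S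
  | some none, S => S.tail
  | some (some γ), S => γ :: S

theorem opApply_opList (o : Option (Option Γ)) (S : List Γ) :
    (fun n => (opList o S)[n]?) = opApply o (fun n => S[n]?) := by
  funext n
  rcases o with _ | _ | γ
  · rfl
  · simp [opList, opApply]
  · cases n <;> simp [opList, opApply]

/-- the micro step function on lists -/
def microStep (M : Λ → TM2.Stmt (fun _ : K => Γ) Λ σ)
    (c : (TM2.Stmt (fun _ : K => Γ) Λ σ × σ) × (K → List Γ)) :
    Option ((TM2.Stmt (fun _ : K => Γ) Λ σ × σ) × (K → List Γ)) :=
  (microNxt M c.1 (fun k => (c.2 k).head?)).map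
    fun q => (q, fun k => opList (microOp c.1 k) (c.2 k))

/-- relation between TM2 configurations and micro configurations -/
def microTr (a : TM2.Cfg (fun _ : K => Γ) Λ σ)
    (b : (TM2.Stmt (fun _ : K => Γ) Λ σ × σ) × (K → List Γ)) : Prop :=
  match a with
  | ⟨some l, v, S⟩ => ∃ f, f v = l ∧ b = ((TM2.Stmt.goto f, v), S)
  | ⟨none, _, _⟩ => b.1.1 = TM2.Stmt.halt

theorem micro_reaches (M : Λ → TM2.Stmt (fun _ : K => Γ) Λ σ)
    (q : TM2.Stmt (fun _ : K => Γ) Λ σ) : ∀ (v : σ) (S : K → List Γ),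
    ∃ b, microTr (TM2.stepAux q v S) b ∧ Reaches (microStep M) ((q, v), S) b := by
  have key : ∀ (a a' b : (TM2.Stmt (fun _ : K => Γ) Λ σ × σ) × (K → List Γ)),
      microStep M a = some a' → Reaches (microStep M) a' b → Reaches (microStep M) a b :=
    fun a a' b h1 h2 => Relation.ReflTransGen.head h1 h2
  induction q with
  | push k f q ih =>
    intro v S
    obtain ⟨b, h1, h2⟩ := ih v (Function.update S k (f v :: S k))
    refine ⟨b, h1, key _ _ _ ?_ h2⟩
    simp only [microStep, microNxt, microOp, Option.map_some, Option.some.injEq, Prod.mk.injEq,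
      true_and]
    funext k'
    by_cases h : k' = k
    · subst h; simp [opList]
    · simp [h, opList]
  | peek k f q ih =>
    intro v S
    obtain ⟨b, h1, h2⟩ := ih (f v (S k).head?) S
    exact ⟨b, h1, key _ _ _ (by simp [microStep, microNxt, microOp, opList]) h2⟩
  | pop k f q ih =>
    intro v S
    obtain ⟨b, h1, h2⟩ := ih (f v (S k).head?) (Function.update S k (S k).tail)
    refine ⟨b, h1, key _ _ _ ?_ h2⟩
    simp only [microStep, microNxt, microOp, Option.map_some, Option.some.injEq, Prod.mk.injEq,
      true_and]
    funext k'
    by_cases h : k' = k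
    · subst h; simp [opList]
    · simp [h, opList]
  | load f q ih =>
    intro v S
    obtain ⟨b, h1, h2⟩ := ih (f v) S
    exact ⟨b, h1, key _ _ _ (by simp [microStep, microNxt, microOp, opList]) h2⟩
  | branch f q₁ q₂ ih₁ ih₂ =>
    intro v S
    rcases hf : f v with _ | _
    · obtain ⟨b, h1, h2⟩ := ih₂ v S
      exact ⟨b, by simpa [hf] using h1,
        key _ _ _ (by simp [microStep, microNxt, microOp, opList, hf]) h2⟩
    · obtain ⟨b, h1, h2⟩ := ih₁ v S
      exact ⟨b, by simpa [hf] using h1,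
        key _ _ _ (by simp [microStep, microNxt, microOp, opList, hf]) h2⟩
  | goto f =>
    intro v S
    exact ⟨_, ⟨f, rfl, rfl⟩, Relation.ReflTransGen.refl⟩
  | halt =>
    intro v S
    exact ⟨((TM2.Stmt.halt, v), S), rfl, Relation.ReflTransGen.refl⟩

theorem micro_respects (M : Λ → TM2.Stmt (fun _ : K => Γ) Λ σ) :
    Respects (TM2.step M) (microStep M) microTr := by
  rintro ⟨l, v, S⟩ b h
  cases l with
  | none =>
    obtain ⟨⟨q, v'⟩, S'⟩ := b
    change q = TM2.Stmt.halt at h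
    subst h
    rfl
  | some l =>
    obtain ⟨f, hf, rfl⟩ := h
    obtain ⟨b, h1, h2⟩ := micro_reaches M (M l) v S
    refine ⟨b, h1, Relation.TransGen.head' (b := ((M l, v), S)) ?_ h2⟩
    simp [microStep, microNxt, microOp, opList, hf]

theorem eval_not_dom_iff {τ : Type} (f : τ → Option τ) (a : τ) :
    ¬ (eval f a).Dom ↔ ∃ c : ℕ → τ, c 0 = a ∧ ∀ t, f (c t) = some (c (t+1)) := by
  constructor
  · intro h
    have hr : ∀ b, Reaches f a b → ∃ b', f b = some b' := by
      intro b hb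
      by_contra hc
      have : f b = none := by
        rcases hfb : f b with _ | b'
        · rfl
        · exact absurd ⟨b', hfb⟩ hc
      exact h (Part.dom_iff_mem.2 ⟨b, mem_eval.2 ⟨hb, this⟩⟩)
    let F : {b // Reaches f a b} → {b // Reaches f a b} := fun b =>
      ⟨(hr b.1 b.2).choose, b.2.tail (hr b.1 b.2).choose_spec⟩
    refine ⟨fun t => (F^[t] ⟨a, (Relation.ReflTransGen.refl : Reaches f a a)⟩).1, rfl,
      fun t => ?_⟩
    simp only [Function.iterate_succ_apply']
    exact (hr _ (F^[t] ⟨a, (Relation.ReflTransGen.refl : Reaches f a a)⟩).2).choose_spec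
  · rintro ⟨c, h0, hc⟩ hd
    obtain ⟨b, hb⟩ := Part.dom_iff_mem.1 hd
    obtain ⟨h1, h2⟩ := mem_eval.1 hb
    have : ∀ b, Reaches f a b → ∃ t, b = c t := by
      intro b hb
      induction hb with
      | refl => exact ⟨0, h0.symm⟩
      | tail _ h ih =>
        obtain ⟨t, rfl⟩ := ih
        refine ⟨t+1, ?_⟩
        rw [hc t] at h
        exact (Option.some.inj h).symm
    obtain ⟨t, rfl⟩ := this b h1
    rw [hc t] at h2
    cases h2

theorem halts_iff_not_dom (M : Λ → TM2.Stmt (fun _ : K => Γ) Λ σ) (l : Λ) (v : σ)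
    (S : K → List Γ) :
    (∃ c, IsRun (microNxt M) microOp c ∧ c 0 = ((M l, v), fun k n => (S k)[n]?)) ↔
      ¬ (eval (TM2.step M) ⟨some l, v, S⟩).Dom := by
  have h1 : (eval (microStep M) ((M l, v), S)).Dom ↔
      (eval (TM2.step M) ⟨some l, v, S⟩).Dom := by
    rw [← tr_eval_dom (micro_respects M) (a₁ := ⟨some l, v, S⟩)
      (a₂ := ((TM2.Stmt.goto (fun _ => l), v), S)) ⟨fun _ => l, rfl, rfl⟩]
    rw [reaches_eval (f := microStep M) (a := ((TM2.Stmt.goto (fun _ => l), v), S))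
      (b := ((M l, v), S))]
    exact Relation.ReflTransGen.single (by simp [microStep, microNxt, microOp, opList])
  rw [← h1, eval_not_dom_iff]
  constructor
  · rintro ⟨c, hrun, h0⟩
    have hl : ∀ t, ∃ L : K → List Γ, (c t).2 = fun k n => (L k)[n]? := by
      intro t
      induction t with
      | zero => exact ⟨S, by rw [h0]⟩
      | succ t ih =>
        obtain ⟨L, hL⟩ := ih
        refine ⟨fun k => opList (microOp (c t).1 k) (L k), ?_⟩
        funext k
        rw [(hrun t).2 k, opApply_opList, hL]
    choose L hL using hl
    have inj : ∀ L L' : List Γ, (fun n => L[n]?) = (fun n => L'[n]?) → L = L' :=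
      fun L L' h => List.ext_getElem? fun n => congrFun h n
    refine ⟨fun t => ((c t).1, L t), ?_, fun t => ?_⟩
    · refine Prod.ext (by simp only [h0]) ?_
      funext k
      apply inj
      have := hL 0
      rw [h0] at this
      exact (congrFun this k).symm
    · simp only [microStep]
      have e := (hrun t).1
      rw [hL t] at e
      simp only [← List.head?_eq_getElem?] at e
      rw [e]
      simp only [Option.map_some, Option.some.injEq, Prod.mk.injEq, true_and]
      funext k
      apply inj
      rw [opApply_opList]
      have := (hrun t).2 k
      rw [hL, hL] at this
      exact this.symm
  · rintro ⟨c, h0, hc⟩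
    refine ⟨fun t => ((c t).1, fun k n => ((c t).2 k)[n]?), fun t => ?_, by simp only [h0]⟩
    have := hc t
    simp only [microStep, Option.map_eq_some_iff] at this
    obtain ⟨q, hq, he⟩ := this
    refine ⟨?_, fun k => ?_⟩
    · simp only [← List.head?_eq_getElem?]
      rw [hq, ← he]
    · simp only
      rw [← opApply_opList, ← he]

/-- the finite set of control states -/
def microSupp (M : Λ → TM2.Stmt (fun _ : K => Γ) Λ σ) (S : Finset Λ) :
    Set (TM2.Stmt (fun _ : K => Γ) Λ σ × σ) :=
  {q | some q.1 ∈ TM2.stmts M S}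

theorem microSupp_finite [Finite σ] (M : Λ → TM2.Stmt (fun _ : K => Γ) Λ σ) (S : Finset Λ) :
    (microSupp M S).Finite := by
  have h : (({q | some q ∈ TM2.stmts M S} : Set (TM2.Stmt (fun _ : K => Γ) Λ σ))).Finite :=
    Set.Finite.preimage (Option.some_injective _).injOn (TM2.stmts M S).finite_toSet
  exact (h.prod Set.finite_univ).subset fun q hq => ⟨hq, trivial⟩

theorem microSupp_closed [Inhabited Λ] (M : Λ → TM2.Stmt (fun _ : K => Γ) Λ σ) (S : Finset Λ)
    (hS : TM2.Supports M S) : ∀ q ∈ microSupp M S, ∀ tp q', microNxt M q tp = some q' →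
      q' ∈ microSupp M S := by
  rintro ⟨q, v⟩ hq tp q' h
  change some q ∈ TM2.stmts M S at hq
  change some q'.1 ∈ TM2.stmts M S
  have hsub : ∀ q1, q1 ∈ TM2.stmts₁ q → some q1 ∈ TM2.stmts M S :=
    fun q1 h1 => TM2.stmts_trans h1 hq
  cases q with
  | goto f =>
    simp only [microNxt, Option.some.injEq] at h
    subst h
    have := TM2.stmts_supportsStmt hS hq
    simp only [TM2.SupportsStmt] at this
    simp only [TM2.stmts, Finset.mem_insertNone, Finset.mem_biUnion, Option.mem_def,
      Option.some.injEq, forall_eq']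
    exact ⟨_, this v, TM2.stmts₁_self⟩
  | halt => simp [microNxt] at h
  | branch f q₁ q₂ =>
    simp only [microNxt, Option.some.injEq] at h
    subst h
    apply hsub
    simp only [TM2.stmts₁, Finset.mem_insert, Finset.mem_union]
    rcases f v with _ | _
    · exact Or.inr (Or.inr TM2.stmts₁_self)
    · exact Or.inr (Or.inl TM2.stmts₁_self)
  | _ =>
    simp only [microNxt, Option.some.injEq] at h
    subst h
    apply hsub
    simp only [TM2.stmts₁, Finset.mem_insert]
    exact Or.inr TM2.stmts₁_self

end Micro
end SelfSim

namespace SelfSim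
open Turing StateTransition

/-- prepend bits (low end first) to a number -/
def ofBits : List Bool → ℕ → ℕ
  | [], N => N
  | b :: bs, N => Nat.bit b (ofBits bs N)

theorem ofBits_eq (bs : List Bool) (N : ℕ) : ofBits bs N = 2 ^ bs.length * N + ofBits bs 0 := by
  induction bs with
  | nil => simp [ofBits]
  | cons b bs ih =>
    simp only [ofBits, List.length_cons]
    rw [ih, Nat.bit_val, Nat.bit_val]
    ring

theorem ofBits_pos (bs : List Bool) {N : ℕ} (h : 0 < N) : 0 < ofBits bs N := by
  induction bs with
  | nil => exact h
  | cons b bs ih => simp only [ofBits, Nat.bit_val]; omega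

theorem ofBits_inj : ∀ (bs bs' : List Bool) (N N' : ℕ), bs.length = bs'.length →
    ofBits bs N = ofBits bs' N' → bs = bs' ∧ N = N'
  | [], [], N, N', _, h => ⟨rfl, h⟩
  | b :: bs, b' :: bs', N, N', hl, h => by
    simp only [ofBits] at h
    have h1 : b = b' ∧ ofBits bs N = ofBits bs' N' := by
      rw [Nat.bit_val, Nat.bit_val] at h
      cases b <;> cases b' <;> simp at h ⊢ <;> omega
    obtain ⟨h2, h3⟩ := ofBits_inj bs bs' N N' (by simpa using hl) h1.2
    exact ⟨by rw [h1.1, h2], h3⟩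

/-- bits as tape symbols -/
def bitSym (b : Bool) : PartrecToTM2.Γ' := cond b PartrecToTM2.Γ'.bit1 PartrecToTM2.Γ'.bit0

theorem trNat_bit (b : Bool) {N : ℕ} (h : 0 < N) :
    PartrecToTM2.trNat (Nat.bit b N) = bitSym b :: PartrecToTM2.trNat N := by
  unfold PartrecToTM2.trNat
  rw [← Num.ofNat'_eq, ← Num.ofNat'_eq, Num.ofNat'_bit]
  rcases hN : Num.ofNat' N with _ | p
  · exfalso
    have := congrArg (fun n : Num => (n : ℕ)) hN
    simp only [Num.ofNat'_eq, Num.to_of_nat] at this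
    change N = 0 at this
    omega
  · cases b <;> rfl

theorem trNat_ofBits (bs : List Bool) {N : ℕ} (h : 0 < N) :
    PartrecToTM2.trNat (ofBits bs N) = bs.map bitSym ++ PartrecToTM2.trNat N := by
  induction bs with
  | nil => rfl
  | cons b bs ih => rw [ofBits, trNat_bit b (ofBits_pos bs h), ih]; rfl

section Enc
variable {A : Type} {r : ℕ} (bl : A → List Bool)

/-- encoding of words as numbers -/
def encW (w : List A) : ℕ := w.foldr (fun a N => ofBits (bl a) N) 1

theorem encW_pos (w : List A) : 0 < encW bl w := by
  induction w with
  | nil => exact one_pos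
  | cons a w ih => exact ofBits_pos _ ih

theorem encW_inj (hr : 0 < r) (hlen : ∀ a, (bl a).length = r) (hinj : Function.Injective bl) :
    Function.Injective (encW bl) := by
  have key : ∀ a w, 1 < encW bl (a :: w) := by
    intro a w
    have := encW_pos bl w
    change 1 < ofBits (bl a) (encW bl w)
    have h2 := hlen a
    rcases hb : bl a with _ | ⟨b, bs⟩
    · rw [hb] at h2; simp at h2; omega
    · have := ofBits_pos bs this
      simp only [ofBits, Nat.bit_val]; omega
  intro w w' h
  induction w generalizing w' with
  | nil =>
    cases w' with
    | nil => rfl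
    | cons a w' => have := key a w'; rw [← h] at this; simp [encW] at this
  | cons a w ih =>
    cases w' with
    | nil => have := key a w; rw [h] at this; simp [encW] at this
    | cons a' w' =>
      obtain ⟨h1, h2⟩ := ofBits_inj _ _ _ _ (by rw [hlen, hlen]) h
      rw [hinj h1, ih h2]

theorem encW_primrec [Primcodable A] [Finite A] (hlen : ∀ a, (bl a).length = r) :
    Primrec (encW bl) := by
  have h1 : Primrec (fun a : A => ofBits (bl a) 0) := Primrec.dom_finite _
  have : Primrec (fun w : List A => w.foldr (fun a N => 2 ^ r * N + ofBits (bl a) 0) 1) := by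
    refine Primrec.list_foldr (f := fun w : List A => w) (g := fun _ => 1)
      (h := fun _ p => 2 ^ r * p.2 + ofBits (bl p.1) 0) Primrec.id (Primrec.const 1) ?_
    exact Primrec.nat_add.comp
      (Primrec.nat_mul.comp (Primrec.const _) (Primrec.snd.comp Primrec.snd))
      (h1.comp (Primrec.fst.comp Primrec.snd))
  refine this.of_eq fun w => ?_
  unfold encW
  congr 1
  funext a N
  rw [ofBits_eq (bl a) N, hlen]

theorem exists_code_of_re [Primcodable A] [Finite A] (hr : 0 < r)
    (hlen : ∀ a, (bl a).length = r) (hinj : Function.Injective bl)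
    (p : List A → Prop) (hp : RE p) :
    ∃ c : ToPartrec.Code, ∀ w, (c.eval [encW bl w]).Dom ↔ p w := by
  have hE := encW_primrec bl hlen
  let f : ℕ → ℕ → Option (List A) := fun N k =>
    (Encodable.decode k : Option (List A)).bind
      (fun w => if encW bl w = N then some w else none)
  have hf : Computable₂ f := by
    apply Primrec₂.to_comp
    refine Primrec.option_bind (Primrec.decode.comp Primrec.snd) ?_
    refine Primrec.ite ?_ (Primrec.option_some.comp Primrec.snd) (Primrec.const none)
    exact Primrec.eq.comp (hE.comp Primrec.snd) (Primrec.fst.comp Primrec.fst)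
  have h1 : Partrec (fun N => Nat.rfindOpt (f N)) := Partrec.rfindOpt hf
  have h2 : Partrec (fun N => (Nat.rfindOpt (f N)).bind
      fun w => Part.assert (p w) fun _ => Part.some ()) :=
    h1.bind (hp.comp Computable.snd)
  have h3 : Partrec (fun N => ((Nat.rfindOpt (f N)).bind
      fun w => Part.assert (p w) fun _ => Part.some ()).map (fun _ => (0 : ℕ))) :=
    h2.map (Computable.const 0).to₂
  obtain ⟨c, hc⟩ := ToPartrec.Code.exists_code (Nat.Partrec'.part_iff₁.2 h3)
  refine ⟨c, fun w => ?_⟩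
  have h4 := hc ⟨[encW bl w], rfl⟩
  change c.eval [encW bl w] = _ at h4
  rw [h4]
  have hw : w ∈ Nat.rfindOpt (f (encW bl w)) := by
    have hd : (Nat.rfindOpt (f (encW bl w))).Dom := by
      rw [Nat.rfindOpt_dom]
      exact ⟨Encodable.encode w, w, by simp [f]⟩
    obtain ⟨k, hk⟩ := Nat.rfindOpt_spec ⟨hd, rfl⟩
    have : (Nat.rfindOpt (f (encW bl w))).get hd = w := by
      simp only [f, Option.mem_def, Option.bind_eq_some_iff] at hk
      obtain ⟨w', _, h'⟩ := hk
      split_ifs at h' with h6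
      rw [← Option.some.inj h']
      exact encW_inj bl hr hlen hinj h6
    exact ⟨hd, this⟩
  have e : Nat.rfindOpt (f (encW bl w)) = Part.some w := Part.eq_some_iff.2 hw
  change ((Nat.rfindOpt (f (encW bl w))).bind _ |>.map _ |>.map _).Dom ↔ _
  rw [e, Part.bind_some]
  simp [Part.assert]

end Enc

theorem unblock_split {Γ : Type} {r : ℕ} (hr : 0 < r) (f : ℕ → Fin r → Option Γ) (n : ℕ) :
    unblock hr f n = if h : n < r then f 0 ⟨n, h⟩ else unblock hr (fun k => f (k+1)) (n - r) := by
  split_ifs with h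
  · have := unblock_apply hr f 0 ⟨n, h⟩
    simpa using this
  · obtain ⟨k, i, hk⟩ := exists_block hr (n - r)
    rw [hk, unblock_apply]
    have : n = r * (k+1) + i := by rw [mul_add, mul_one]; omega
    rw [this, unblock_apply]

/-- main technical result: complement of an r.e. set of words is recognised by tilings -/
theorem tile_lemma {A : Type} [Primcodable A] [Finite A] (p : List A → Prop) (hp : RE p) :
    ∃ (Θ : Type) (_ : Finite Θ) (Sq : Θ → Θ → Θ → Θ → Prop) (Col : Θ → Θ → Prop)
      (Init : Option (Option A) → Θ → Prop), ∀ w : List A,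
      (∃ θ, ValidTiling Sq Col Init (fun k => (w.map some ++ [none])[k]?) θ) ↔ ¬ p w := by
  obtain ⟨N, ⟨e⟩⟩ := Finite.exists_equiv_fin A
  obtain ⟨r, hr2, hrN⟩ : ∃ r, 2 ≤ r ∧ N ≤ r := ⟨N + 2, by omega, by omega⟩
  have hr : 0 < r := by omega
  let bl : A → List Bool := fun a => List.ofFn (fun j : Fin r => decide (j.val = (e a).val))
  have hlen : ∀ a, (bl a).length = r := fun a => List.length_ofFn
  have hinj : Function.Injective bl := by
    intro a a' h
    have h1 := List.ofFn_injective h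
    have h2 := congrFun h1 ⟨(e a).val, by have := (e a).2; omega⟩
    simp only [decide_true] at h2
    have h3 := of_decide_eq_true h2.symm
    exact e.injective (Fin.ext h3)
  obtain ⟨c, hc⟩ := exists_code_of_re bl hr hlen hinj p hp
  let ini : Option (Option A) → PartrecToTM2.K' → Fin r → Option PartrecToTM2.Γ' :=
    fun l k j => match k, l with
      | PartrecToTM2.K'.main, some (some a) => some (bitSym (decide (j.val = (e a).val)))
      | PartrecToTM2.K'.main, some none => [PartrecToTM2.Γ'.bit1, PartrecToTM2.Γ'.cons][j.val]?
      | _, _ => none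
  have hini : ∀ w : List A, (fun k => unblock hr
      (fun n => ini ((w.map some ++ [none])[n]?) k)) =
      fun k n => (PartrecToTM2.K'.elim (PartrecToTM2.trList [encW bl w]) [] [] [] k)[n]? := by
    intro w
    funext k
    cases k with
    | main =>
      simp only [PartrecToTM2.K'.elim, PartrecToTM2.trList]
      induction w with
      | nil =>
        funext n
        have : PartrecToTM2.trNat (encW bl []) = [PartrecToTM2.Γ'.bit1] := by
          simp only [encW, List.foldr_nil]
          unfold PartrecToTM2.trNat
          rw [Nat.cast_one]; rfl
        rw [this]
        rw [unblock_split]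
        split_ifs with h
        · simp [ini]
        · obtain ⟨k, i, hk⟩ := exists_block hr (n - r)
          rw [hk, unblock_apply]
          simp only [ini, List.map_nil, List.nil_append, List.getElem?_cons_succ,
            List.getElem?_nil]
          symm
          apply List.getElem?_eq_none
          simp; omega
      | cons a w ih =>
        funext n
        have : PartrecToTM2.trNat (encW bl (a :: w)) =
            (bl a).map bitSym ++ PartrecToTM2.trNat (encW bl w) :=
          trNat_ofBits (bl a) (encW_pos bl w)
        have hl : ((bl a).map bitSym).length = r := by rw [List.length_map, hlen]
        rw [this, unblock_split, List.append_assoc,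
          List.getElem?_append (l₁ := (bl a).map bitSym), hl]
        split_ifs with h
        · simp [ini, bl, h]
        · exact congrFun ih (n - r)
    | _ =>
      funext n
      obtain ⟨k, i, rfl⟩ := exists_block hr n
      rw [unblock_apply]
      simp [ini, PartrecToTM2.K'.elim]
  let _ : Inhabited PartrecToTM2.Λ' := ⟨PartrecToTM2.trNormal c PartrecToTM2.Cont'.halt⟩
  have hsup : TM2.Supports PartrecToTM2.tr (PartrecToTM2.codeSupp c PartrecToTM2.Cont'.halt) :=
    PartrecToTM2.tr_supports c PartrecToTM2.Cont'.halt
  have : Finite PartrecToTM2.K' := by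
    refine Finite.of_injective (fun k => match k with
      | PartrecToTM2.K'.main => (0 : Fin 4)
      | PartrecToTM2.K'.rev => 1
      | PartrecToTM2.K'.aux => 2
      | PartrecToTM2.K'.stack => 3) ?_
    intro a b h
    cases a <;> cases b <;> simp at h ⊢
  obtain ⟨Θ, hΘ, Sq, Col, Init, H⟩ := stack_tile (Λ := Option (Option A))
    (microNxt PartrecToTM2.tr) microOp
    (microSupp PartrecToTM2.tr (PartrecToTM2.codeSupp c PartrecToTM2.Cont'.halt))
    (microSupp_finite _ _) (microSupp_closed _ _ hsup)
    (PartrecToTM2.tr (PartrecToTM2.trNormal c PartrecToTM2.Cont'.halt), none)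
    (by
      change some _ ∈ TM2.stmts _ _
      simp only [TM2.stmts, Finset.mem_insertNone, Finset.mem_biUnion, Option.mem_def,
        Option.some.injEq]
      intro q hq
      cases Option.some.inj hq
      exact ⟨_, hsup.1, TM2.stmts₁_self⟩) r hr ini
  refine ⟨Θ, hΘ, Sq, Col, Init, fun w => ?_⟩
  rw [H, hini]
  refine (halts_iff_not_dom PartrecToTM2.tr _ none _).trans ?_
  rw [← hc]
  have := PartrecToTM2.tr_eval c [encW bl w]
  unfold PartrecToTM2.init at this
  rw [this]
  rfl

end SelfSim

namespace SelfSim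

/-- abstract system of rays -/
structure RayMaps {I G : Type} (Adj : I → I → Prop) (L R : I → G → G) : Prop where
  symm : ∀ i j, Adj i j → Adj j i
  injL : ∀ i, Function.Injective (L i)
  injR : ∀ i, Function.Injective (R i)
  disj : ∀ i g h, L i g ≠ R i h
  LL : ∀ i j, Adj i j → ∀ g, L i (L j g) = L j (L i g)
  LR : ∀ i j, Adj i j → ∀ g, L i (R j g) = R j (L i g)
  RR : ∀ i j, Adj i j → ∀ g, R i (R j g) = R j (R i g)

/-- the `n`-th point of the `i`-th ray at `g` -/
def rayPt {I G : Type} (L R : I → G → G) (i : I) (n : ℕ) (g : G) : G := (L i)^[n] (R i g)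

section Rays
variable {I G : Type} {Adj : I → I → Prop} {L R : I → G → G}

theorem rayPt_zero (i : I) (g : G) : rayPt L R i 0 g = R i g := rfl

theorem rayPt_succ (i : I) (n : ℕ) (g : G) : rayPt L R i (n+1) g = L i (rayPt L R i n g) :=
  Function.iterate_succ_apply' _ _ _

theorem rayPt_inj (H : RayMaps Adj L R) (i : I) : ∀ (n m : ℕ) (g h : G),
    rayPt L R i n g = rayPt L R i m h → n = m ∧ g = h
  | 0, 0, g, h, e => ⟨rfl, H.injR i e⟩
  | 0, m+1, g, h, e => by
    rw [rayPt_succ] at e; exact absurd e.symm (H.disj i _ _)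
  | n+1, 0, g, h, e => by
    rw [rayPt_succ] at e; exact absurd e (H.disj i _ _)
  | n+1, m+1, g, h, e => by
    rw [rayPt_succ, rayPt_succ] at e
    obtain ⟨h1, h2⟩ := rayPt_inj H i n m g h (H.injL i e)
    exact ⟨by rw [h1], h2⟩

theorem L_rayPt (H : RayMaps Adj L R) {i j : I} (hij : Adj i j) (n : ℕ) (g : G) :
    L j (rayPt L R i n g) = rayPt L R i n (L j g) := by
  induction n with
  | zero => exact H.LR j i (H.symm _ _ hij) g
  | succ n ih => rw [rayPt_succ, rayPt_succ, ← ih, H.LL i j hij]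

theorem R_rayPt (H : RayMaps Adj L R) {i j : I} (hij : Adj i j) (n : ℕ) (g : G) :
    R j (rayPt L R i n g) = rayPt L R i n (R j g) := by
  induction n with
  | zero => exact H.RR j i (H.symm _ _ hij) g
  | succ n ih => rw [rayPt_succ, rayPt_succ, ← ih, H.LR i j hij]

theorem rayPt_comm (H : RayMaps Adj L R) {i j : I} (hij : Adj i j) (n k : ℕ) (g : G) :
    rayPt L R j k (rayPt L R i n g) = rayPt L R i n (rayPt L R j k g) := by
  induction k with
  | zero => exact R_rayPt H hij n g
  | succ k ih => rw [rayPt_succ, rayPt_succ, ih, L_rayPt H hij]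

open Classical in
/-- decoding of ray points -/
noncomputable def dec (L R : I → G → G) (i : I) (g : G) : Option (ℕ × G) :=
  if h : ∃ p : ℕ × G, rayPt L R i p.1 p.2 = g then some h.choose else none

theorem dec_rayPt (H : RayMaps Adj L R) (i : I) (n : ℕ) (g : G) :
    dec L R i (rayPt L R i n g) = some (n, g) := by
  unfold dec
  have h : ∃ p : ℕ × G, rayPt L R i p.1 p.2 = rayPt L R i n g := ⟨(n, g), rfl⟩
  rw [dif_pos h]
  obtain ⟨h1, h2⟩ := rayPt_inj H i _ _ _ _ h.choose_spec
  exact congrArg some (Prod.ext h1 h2)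

theorem dec_some {i : I} {g h : G} {n : ℕ} (e : dec L R i g = some (n, h)) :
    g = rayPt L R i n h := by
  unfold dec at e
  split_ifs at e with h'
  have := h'.choose_spec
  rw [Option.some.inj e] at this
  exact this.symm

theorem dec_none {i : I} {g : G} (e : dec L R i g = none) (n : ℕ) (h : G) :
    g ≠ rayPt L R i n h := by
  rintro rfl
  unfold dec at e
  split_ifs at e with h'
  exact h' ⟨(n, h), rfl⟩

theorem dec_R (H : RayMaps Adj L R) (i : I) (g : G) : dec L R i (R i g) = some (0, g) :=
  dec_rayPt H i 0 g

theorem dec_L_none (H : RayMaps Adj L R) (i : I) (g : G) (e : dec L R i g = none) :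
    dec L R i (L i g) = none := by
  by_contra hc
  obtain ⟨⟨n, h⟩, hn⟩ := Option.ne_none_iff_exists'.1 hc
  have := dec_some hn
  cases n with
  | zero => exact H.disj i _ _ this
  | succ n =>
    rw [rayPt_succ] at this
    exact dec_none e n h (H.injL i this)

theorem dec_L_some (H : RayMaps Adj L R) (i : I) (g h : G) (n : ℕ)
    (e : dec L R i g = some (n, h)) : dec L R i (L i g) = some (n+1, h) := by
  rw [dec_some e, ← rayPt_succ (L := L) (R := R), dec_rayPt H]

end Rays

/-- symbols of the SFT -/
structure Sym (I B P Θ : Type) where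
  /-- first direction bits -/
  l : I → Bool
  /-- second direction bits -/
  r : I → Bool
  /-- data -/
  d : I → B
  /-- first transported data -/
  u : I → I → B
  /-- second transported data -/
  v : I → I → B
  /-- diagonal flag -/
  del : I → I → Bool
  /-- below diagonal flag -/
  lt : I → I → Bool
  /-- above diagonal flag -/
  gt : I → I → Bool
  /-- tiles -/
  tau : P → Option Θ

instance symFinite {I B P Θ : Type} [Finite I] [Finite B] [Finite P] [Finite Θ] :
    Finite (Sym I B P Θ) := by
  refine Finite.of_injective (fun x : Sym I B P Θ =>
    (x.l, x.r, x.d, x.u, x.v, x.del, x.lt, x.gt, x.tau)) ?_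
  intro x y h
  cases x; cases y
  simpa using h

/-- The semantic rules. -/
structure Good {I G Θ : Type} [Group G] {m : ℕ} (P : Finset G) (s : Fin m → G) (i1 : Fin m)
    (Adj : I → I → Prop) (T : Set G) (Fix : I → G → Prop) (α β : I)
    (Sq : Θ → Θ → Θ → Θ → Prop) (Col : Θ → Θ → Prop)
    (Init : Option (Option (Fin m → Bool)) → Θ → Prop)
    (L R : I → G → G) (x : G → Sym I (P → Fin m → Bool) P Θ) : Prop where
  du : ∀ i j, Adj i j → ∀ g, (x (R j g)).u i j = (x g).d i
  uu : ∀ i j, Adj i j → ∀ g, (x (L j g)).u i j = (x g).u i j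
  dv : ∀ i j, Adj i j → ∀ g, (x (R i g)).v i j = (x g).d j
  vv : ∀ i j, Adj i j → ∀ g, (x (L i g)).v i j = (x g).v i j
  del0 : ∀ i j, Adj i j → ∀ g, (x (R i (R j g))).del i j = true
  delS : ∀ i j, Adj i j → ∀ g, (x g).del i j = true → (x (L i (L j g))).del i j = true
  deq : ∀ i j, Adj i j → ∀ g, (x g).del i j = true → (x g).u i j = (x g).v i j
  ltS : ∀ i j, Adj i j → ∀ g, ((x g).del i j = true ∨ (x g).lt i j = true) →
    (x (L i g)).lt i j = true
  gtS : ∀ i j, Adj i j → ∀ g, ((x g).del i j = true ∨ (x g).gt i j = true) →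
    (x (L j g)).gt i j = true
  iniLt : ∀ p g, (x g).lt α β = true → ∃ θ, (x (R α g)).tau p = some θ ∧
    Init (some (some ((x g).v α β p))) θ
  iniDel : ∀ p g, (x g).del α β = true → ∃ θ, (x (R α g)).tau p = some θ ∧ Init (some none) θ
  iniGt : ∀ p g, (x g).gt α β = true → ∃ θ, (x (R α g)).tau p = some θ ∧ Init none θ
  sq : ∀ p g a, (x g).tau p = some a → ∃ b c d, (x (L β g)).tau p = some b ∧
    (x (L α g)).tau p = some c ∧ (x (L α (L β g))).tau p = some d ∧ Sq a b c d
  col : ∀ p g a, (x (R β g)).tau p = some a → ∃ c, (x (L α (R β g))).tau p = some c ∧ Col a c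
  dat : ∀ i t, t ∈ T → Fix i t → ∀ g (p p' : P), (p : G) = 1 → (p' : G) = t⁻¹ →
    (x (g * t)).d i p = (x g).d i p'
  cons : ∀ i g (p p' : P) k, (p' : G) = s k * p → (x g).d i p k = (x g).d i p' i1

/-- initial part of a sequence -/
def prefixW {A : Type} (y : ℕ → A) (n : ℕ) : List A := (List.range n).map y

theorem prefixW_input {A : Type} (y : ℕ → A) (n k : ℕ) :
    ((prefixW y n).map some ++ [none])[k]? =
      if k < n then some (some (y k)) else if k = n then some none else none := by
  rw [List.getElem?_append]
  simp only [prefixW, List.length_map, List.length_range]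
  split_ifs with h h'
  · simp [h]
  · simp [h']
  · apply List.getElem?_eq_none; simp; omega

section Forward
variable {I G Θ : Type} [Group G] {m : ℕ} {P : Finset G} {s : Fin m → G} {i1 : Fin m}
    {Adj : I → I → Prop} {T : Set G} {Fix : I → G → Prop} {α β : I}
    {Sq : Θ → Θ → Θ → Θ → Prop} {Col : Θ → Θ → Prop}
    {Init : Option (Option (Fin m → Bool)) → Θ → Prop}
    {L R : I → G → G} {x : G → Sym I (P → Fin m → Bool) P Θ}

theorem good_u (X : Good P s i1 Adj T Fix α β Sq Col Init L R x) {i j : I} (hij : Adj i j)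
    (n : ℕ) (g : G) : (x (rayPt L R j n g)).u i j = (x g).d i := by
  induction n with
  | zero => exact X.du i j hij g
  | succ n ih => rw [rayPt_succ, X.uu i j hij, ih]

theorem good_v (X : Good P s i1 Adj T Fix α β Sq Col Init L R x) {i j : I} (hij : Adj i j)
    (n : ℕ) (g : G) : (x (rayPt L R i n g)).v i j = (x g).d j := by
  induction n with
  | zero => exact X.dv i j hij g
  | succ n ih => rw [rayPt_succ, X.vv i j hij, ih]

theorem good_del (H : RayMaps Adj L R) (X : Good P s i1 Adj T Fix α β Sq Col Init L R x)
    {i j : I} (hij : Adj i j)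
    (n : ℕ) (g : G) : (x (rayPt L R i n (rayPt L R j n g))).del i j = true := by
  induction n with
  | zero => exact X.del0 i j hij g
  | succ n ih =>
    rw [rayPt_succ, rayPt_succ, ← L_rayPt H hij]
    exact X.delS i j hij _ ih

theorem good_lt (H : RayMaps Adj L R) (X : Good P s i1 Adj T Fix α β Sq Col Init L R x)
    {i j : I} (hij : Adj i j) (k e : ℕ) (g : G) :
    (x (rayPt L R i (k+1+e) (rayPt L R j k g))).lt i j = true := by
  induction e with
  | zero =>
    rw [add_zero, rayPt_succ]
    exact X.ltS i j hij _ (Or.inl (good_del H X hij k g))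
  | succ e ih =>
    rw [← add_assoc, rayPt_succ]
    exact X.ltS i j hij _ (Or.inr ih)

theorem good_gt (H : RayMaps Adj L R) (X : Good P s i1 Adj T Fix α β Sq Col Init L R x)
    {i j : I} (hij : Adj i j) (n e : ℕ) (g : G) :
    (x (rayPt L R i n (rayPt L R j (n+1+e) g))).gt i j = true := by
  induction e with
  | zero =>
    rw [add_zero, rayPt_succ, ← L_rayPt H hij]
    exact X.gtS i j hij _ (Or.inl (good_del H X hij n g))
  | succ e ih =>
    rw [← add_assoc, rayPt_succ, ← L_rayPt H hij]
    exact X.gtS i j hij _ (Or.inr ih)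

theorem good_z (H : RayMaps Adj L R) (X : Good P s i1 Adj T Fix α β Sq Col Init L R x)
    {i j : I} (hij : Relation.ReflTransGen Adj i j) (n : ℕ) (g : G) :
    (x (rayPt L R i n g)).d i = (x (rayPt L R j n g)).d j := by
  induction hij with
  | refl => rfl
  | @tail b c _ hbc ih =>
    rw [ih, ← good_u X hbc n, ← good_v X hbc n, rayPt_comm H hbc]
    exact X.deq _ _ hbc _ (good_del H X hbc n g)

theorem good_tiling (H : RayMaps Adj L R) (X : Good P s i1 Adj T Fix α β Sq Col Init L R x)
    (hαβ : Adj α β) (p : P) (n : ℕ) (h : G) : ∃ θ, ValidTiling Sq Col Init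
      (fun k => ((prefixW (fun k => (x (rayPt L R β k h)).d β p) n).map some ++ [none])[k]?) θ := by
  set q := rayPt L R α n h with hq
  have h0 : ∀ k, ∃ θ, (x (rayPt L R α 0 (rayPt L R β k q))).tau p = some θ ∧
      Init (((prefixW (fun k => (x (rayPt L R β k h)).d β p) n).map some ++ [none])[k]?) θ := by
    intro k
    rw [rayPt_zero, prefixW_input, hq, rayPt_comm H hαβ]
    split_ifs with h1 h2
    · obtain ⟨e, rfl⟩ : ∃ e, n = k + 1 + e := ⟨n - (k+1), by omega⟩
      have := X.iniLt p _ (good_lt H X hαβ k e h)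
      rwa [good_v X hαβ] at this
    · subst h2
      exact X.iniDel p _ (good_del H X hαβ k h)
    · obtain ⟨e, rfl⟩ : ∃ e, k = n + 1 + e := ⟨k - (n+1), by omega⟩
      exact X.iniGt p _ (good_gt H X hαβ n e h)
  have hall : ∀ t k, ∃ θ, (x (rayPt L R α t (rayPt L R β k q))).tau p = some θ := by
    intro t
    induction t with
    | zero => intro k; obtain ⟨θ, h1, _⟩ := h0 k; exact ⟨θ, h1⟩
    | succ t ih =>
      intro k
      obtain ⟨a, ha⟩ := ih k
      obtain ⟨b, c, d, _, hc, _⟩ := X.sq p _ a ha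
      exact ⟨c, by rw [rayPt_succ]; exact hc⟩
  choose θ hθ using hall
  refine ⟨θ, fun t k => ?_, fun t => ?_, fun k => ?_⟩
  · obtain ⟨b, c, d, hb, hc, hd, hs⟩ := X.sq p _ _ (hθ t k)
    rw [L_rayPt H hαβ, ← rayPt_succ (L := L) (R := R), hθ] at hb
    rw [← rayPt_succ (L := L) (R := R), hθ] at hc
    rw [L_rayPt H hαβ, ← rayPt_succ (L := L) (R := R), ← rayPt_succ (L := L) (R := R), hθ] at hd
    cases hb; cases hc; cases hd
    exact hs
  · have e : rayPt L R α t (rayPt L R β 0 q) = R β (rayPt L R α t q) := by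
      rw [R_rayPt H hαβ]; rfl
    have h1 := hθ t 0
    rw [e] at h1
    obtain ⟨c, hc, hcol⟩ := X.col p _ _ h1
    rw [← e, ← rayPt_succ (L := L) (R := R), hθ] at hc
    cases hc
    exact hcol
  · obtain ⟨a, ha, hi⟩ := h0 k
    rw [hθ] at ha
    cases ha
    exact hi

end Forward
end SelfSim

namespace SelfSim

section Backward
set_option linter.unusedSectionVars false
variable {I G Θ : Type} [Group G] {m : ℕ} {P : Finset G} {s : Fin m → G} {i1 : Fin m}
    {Adj : I → I → Prop} {T : Set G} {Fix : I → G → Prop} {α β : I}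
    {Sq : Θ → Θ → Θ → Θ → Prop} {Col : Θ → Θ → Prop}
    {Init : Option (Option (Fin m → Bool)) → Θ → Prop}
    {L R : I → G → G}

/-- data field of the configuration built from `z` -/
noncomputable def mkD (L R : I → G → G) (z : G → ℕ → P → Fin m → Bool) (i : I) (g : G) :
    P → Fin m → Bool :=
  (dec L R i g).elim (fun _ _ => false) (fun p => z p.2 p.1)

/-- transport along rays -/
noncomputable def mkT {B : Type} (L R : I → G → G) (b0 : B) (F : G → B) (i : I) (g : G) : B :=
  (dec L R i g).elim b0 (fun p => F p.2)

theorem mkT_R {B : Type} (H : RayMaps Adj L R) (b0 : B) (F : G → B) (i : I) (g : G) :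
    mkT L R b0 F i (R i g) = F g := by
  rw [mkT, dec_R H]; rfl

theorem mkT_ray {B : Type} (H : RayMaps Adj L R) (b0 : B) (F : G → B) (i : I) (n : ℕ) (g : G) :
    mkT L R b0 F i (rayPt L R i n g) = F g := by
  rw [mkT, dec_rayPt H]; rfl

theorem mkT_L {B : Type} (H : RayMaps Adj L R) (b0 : B) (F : G → B) (i : I) (g : G) :
    mkT L R b0 F i (L i g) = mkT L R b0 F i g := by
  unfold mkT
  rcases e : dec L R i g with _ | ⟨n, h⟩
  · rw [dec_L_none H i g e]
  · rw [dec_L_some H i g h n e]; rfl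

/-- tile field -/
noncomputable def mkTau (L R : I → G → G) (α β : I) (θ : G → ℕ → P → ℕ → ℕ → Θ) (g : G) (p : P) :
    Option Θ :=
  (dec L R α g).bind fun a => (dec L R β a.2).bind fun b => (dec L R α b.2).map fun c =>
    θ c.2 c.1 p a.1 b.1

theorem mkTau_ray (H : RayMaps Adj L R) (θ : G → ℕ → P → ℕ → ℕ → Θ) (t k n : ℕ) (h : G) (p : P) :
    mkTau L R α β θ (rayPt L R α t (rayPt L R β k (rayPt L R α n h))) p = some (θ h n p t k) := by
  simp [mkTau, dec_rayPt H]

theorem mkTau_some (θ : G → ℕ → P → ℕ → ℕ → Θ) (g : G) (p : P) (a : Θ)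
    (e : mkTau L R α β θ g p = some a) : ∃ t k n h,
      g = rayPt L R α t (rayPt L R β k (rayPt L R α n h)) ∧ a = θ h n p t k := by
  simp only [mkTau, Option.bind_eq_some_iff, Option.map_eq_some_iff] at e
  obtain ⟨⟨t, g1⟩, h1, ⟨k, g2⟩, h2, ⟨n, h⟩, h3, h4⟩ := e
  refine ⟨t, k, n, h, ?_, h4.symm⟩
  simp only at h2 h3
  rw [dec_some h1, dec_some h2, dec_some h3]

open Classical in
/-- the configuration built from the data -/
noncomputable def mkX (L R : I → G → G) (l r : I → G → Bool) (α β : I)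
    (z : G → ℕ → P → Fin m → Bool) (θ : G → ℕ → P → ℕ → ℕ → Θ) (g : G) :
    Sym I (P → Fin m → Bool) P Θ where
  l := fun i => l i g
  r := fun i => r i g
  d := fun i => mkD L R z i g
  u := fun i j => mkT L R (fun _ _ => false) (mkD L R z i) j g
  v := fun i j => mkT L R (fun _ _ => false) (mkD L R z j) i g
  del := fun i j => decide (∃ n h, g = rayPt L R i n (rayPt L R j n h))
  lt := fun i j => decide (∃ n k h, k < n ∧ g = rayPt L R i n (rayPt L R j k h))
  gt := fun i j => decide (∃ n k h, n < k ∧ g = rayPt L R i n (rayPt L R j k h))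
  tau := fun p => mkTau L R α β θ g p

theorem mkX_d_ray (H : RayMaps Adj L R) (l r : I → G → Bool)
    (z : G → ℕ → P → Fin m → Bool) (θ : G → ℕ → P → ℕ → ℕ → Θ) (i : I) (n : ℕ) (g : G) :
    (mkX L R l r α β z θ (rayPt L R i n g)).d i = z g n := by
  simp [mkX, mkD, dec_rayPt H]

theorem mkX_good (H : RayMaps Adj L R) (l r : I → G → Bool) (hαβ : Adj α β)
    (hT : ∀ i t, t ∈ T → Fix i t → ∀ g, L i (g * t) = L i g * t ∧ R i (g * t) = R i g * t)
    (z : G → ℕ → P → Fin m → Bool)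
    (hdat : ∀ t ∈ T, ∀ g n (p p' : P), (p : G) = 1 → (p' : G) = t⁻¹ → z (g * t) n p = z g n p')
    (hcons : ∀ g n (p p' : P) k, (p' : G) = s k * p → z g n p k = z g n p' i1)
    (θ : G → ℕ → P → ℕ → ℕ → Θ)
    (hθ : ∀ g n p, ValidTiling Sq Col Init
      (fun k => ((prefixW (fun k => z g k p) n).map some ++ [none])[k]?) (θ g n p)) :
    Good P s i1 Adj T Fix α β Sq Col Init L R (mkX L R l r α β z θ) := by
  classical
  have hray : ∀ i t, t ∈ T → Fix i t → ∀ n g, rayPt L R i n (g * t) = rayPt L R i n g * t := by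
    intro i t ht hf n g
    induction n with
    | zero => exact (hT i t ht hf g).2
    | succ n ih => rw [rayPt_succ, rayPt_succ, ih, (hT i t ht hf _).1]
  constructor
  case du => intro i j _ g; exact mkT_R H _ _ _ _
  case uu => intro i j _ g; exact mkT_L H _ _ _ _
  case dv => intro i j _ g; exact mkT_R H _ _ _ _
  case vv => intro i j _ g; exact mkT_L H _ _ _ _
  case del0 => intro i j _ g; exact decide_eq_true ⟨0, g, rfl⟩
  case delS =>
    intro i j hij g hh
    obtain ⟨n, h, rfl⟩ := of_decide_eq_true hh
    refine decide_eq_true ⟨n+1, h, ?_⟩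
    rw [rayPt_succ, rayPt_succ, ← L_rayPt H hij]
  case deq =>
    intro i j hij g hh
    obtain ⟨n, h, rfl⟩ := of_decide_eq_true hh
    simp only [mkX]
    rw [mkT_ray H, ← rayPt_comm H hij, mkT_ray H]
    simp [mkD, dec_rayPt H]
  case ltS =>
    intro i j hij g hh
    rcases hh with hh | hh
    · obtain ⟨n, h, rfl⟩ := of_decide_eq_true hh
      exact decide_eq_true ⟨n+1, n, h, by omega, (rayPt_succ _ _ _).symm⟩
    · obtain ⟨n, k, h, hk, rfl⟩ := of_decide_eq_true hh
      exact decide_eq_true ⟨n+1, k, h, by omega, (rayPt_succ _ _ _).symm⟩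
  case gtS =>
    intro i j hij g hh
    rcases hh with hh | hh
    · obtain ⟨n, h, rfl⟩ := of_decide_eq_true hh
      exact decide_eq_true ⟨n, n+1, h, by omega, by rw [rayPt_succ, L_rayPt H hij]⟩
    · obtain ⟨n, k, h, hk, rfl⟩ := of_decide_eq_true hh
      exact decide_eq_true ⟨n, k+1, h, by omega, by rw [rayPt_succ, L_rayPt H hij]⟩
  case iniLt =>
    intro p g hh
    obtain ⟨n, k, h, hk, rfl⟩ := of_decide_eq_true hh
    refine ⟨θ h n p 0 k, ?_, ?_⟩
    · rw [← rayPt_comm H hαβ]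
      exact mkTau_ray H θ 0 k n h p
    · have := (hθ h n p).2.2 k
      simp only [prefixW_input, if_pos hk] at this
      simp only [mkX]
      rw [mkT_ray H]
      simpa [mkD, dec_rayPt H] using this
  case iniDel =>
    intro p g hh
    obtain ⟨n, h, rfl⟩ := of_decide_eq_true hh
    refine ⟨θ h n p 0 n, ?_, ?_⟩
    · rw [← rayPt_comm H hαβ]
      exact mkTau_ray H θ 0 n n h p
    · have := (hθ h n p).2.2 n
      simpa [prefixW_input] using this
  case iniGt =>
    intro p g hh
    obtain ⟨n, k, h, hk, rfl⟩ := of_decide_eq_true hh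
    refine ⟨θ h n p 0 k, ?_, ?_⟩
    · rw [← rayPt_comm H hαβ]
      exact mkTau_ray H θ 0 k n h p
    · have := (hθ h n p).2.2 k
      simp only [prefixW_input] at this
      rwa [if_neg (by omega), if_neg (by omega)] at this
  case sq =>
    intro p g a hh
    obtain ⟨t, k, n, h, rfl, rfl⟩ := mkTau_some θ g p a hh
    refine ⟨θ h n p t (k+1), θ h n p (t+1) k, θ h n p (t+1) (k+1), ?_, ?_, ?_, (hθ h n p).1 t k⟩
    · rw [L_rayPt H hαβ, ← rayPt_succ (L := L) (R := R)]; exact mkTau_ray H θ _ _ _ _ _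
    · rw [← rayPt_succ (L := L) (R := R)]; exact mkTau_ray H θ _ _ _ _ _
    · rw [L_rayPt H hαβ, ← rayPt_succ (L := L) (R := R), ← rayPt_succ (L := L) (R := R)]
      exact mkTau_ray H θ _ _ _ _ _
  case col =>
    intro p g a hh
    obtain ⟨t, k, n, h, e, rfl⟩ := mkTau_some θ _ p a hh
    have e' := e
    rw [← rayPt_comm H hαβ, ← rayPt_zero (L := L) (R := R)] at e'
    obtain ⟨hk, -⟩ := rayPt_inj H β _ _ _ _ e'
    subst hk
    refine ⟨θ h n p (t+1) 0, ?_, (hθ h n p).2.1 t⟩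
    rw [e, ← rayPt_succ (L := L) (R := R)]; exact mkTau_ray H θ _ _ _ _ _
  case dat =>
    intro i t ht hf g p p' hp hp'
    simp only [mkX, mkD]
    rcases e : dec L R i g with _ | ⟨n, h⟩
    · rcases e' : dec L R i (g * t) with _ | ⟨n, h⟩
      · rfl
      · exfalso
        refine dec_none e n (h * t⁻¹) ?_
        have := hray i t ht hf n (h * t⁻¹)
        rw [inv_mul_cancel_right, ← dec_some e'] at this
        exact mul_right_cancel this
    · rw [dec_some e, ← hray i t ht hf, dec_rayPt H]
      exact hdat t ht h n p p' hp hp'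
  case cons =>
    intro i g p p' k hp
    simp only [mkX, mkD]
    rcases dec L R i g with _ | ⟨n, h⟩
    · rfl
    · exact hcons h n p p' k hp

end Backward
end SelfSim

open scoped Pointwise
namespace SelfSim

/-- signed element -/
def sg {G : Type} [Group G] (x : G) (s : Bool) : G := if s then x else x⁻¹

theorem sg_not {G : Type} [Group G] (x : G) (s : Bool) : sg x (!s) = (sg x s)⁻¹ := by
  cases s <;> simp [sg]

/-- move along a signed generator -/
def mv {G : Type} [Group G] (x : G) (s : G → Bool) (g : G) : G := g * sg x (s g)

/-- ray structures -/
structure RayStr {I G : Type} [Group G] (a b : I → G) (Fix : I → G → Prop)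
    (l r : I → G → Bool) : Prop where
  invl : ∀ i f, Fix i f → ∀ g, l i (g * f) = l i g
  invr : ∀ i f, Fix i f → ∀ g, r i (g * f) = r i g
  injL : ∀ i, Function.Injective (mv (a i) (l i))
  injR : ∀ i, Function.Injective (mv (b i) (r i))
  disj : ∀ i g h, mv (a i) (l i) g ≠ mv (b i) (r i) h

/-- adjacency of indices -/
def AdjOf {I G : Type} [Group G] (a b : I → G) (Fix : I → G → Prop) (i j : I) : Prop :=
  ∀ σ, Fix i (sg (a j) σ) ∧ Fix i (sg (b j) σ) ∧ Fix j (sg (a i) σ) ∧ Fix j (sg (b i) σ)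

section Str
variable {I G : Type} [Group G] {a b : I → G} {Fix : I → G → Prop}

theorem commute_sg {x f : G} (h : Commute f x) (s : Bool) : Commute f (sg x s) := by
  cases s
  · simpa [sg] using h
  · simpa [sg] using h

theorem mv_mul {x f : G} {s : G → Bool} (h : Commute f x) (hs : ∀ g, s (g * f) = s g) (g : G) :
    mv x s (g * f) = mv x s g * f := by
  unfold mv
  rw [hs, mul_assoc, mul_assoc, (commute_sg h (s g)).eq]

theorem mv_comm {x y : G} {s t : G → Bool} (h : Commute x y)
    (hs : ∀ σ g, s (g * sg y σ) = s g) (ht : ∀ σ g, t (g * sg x σ) = t g) (g : G) :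
    mv x s (mv y t g) = mv y t (mv x s g) := by
  have h1 : mv x s (mv y t g) = mv x s g * sg y (t g) :=
    mv_mul (commute_sg h (t g)).symm (hs (t g)) g
  rw [h1]
  change _ = mv x s g * sg y (t (g * sg x (s g)))
  rw [ht]

theorem RayStr.maps (hcomm : ∀ i f, Fix i f → Commute f (a i) ∧ Commute f (b i))
    {l r : I → G → Bool} (H : RayStr a b Fix l r) :
    RayMaps (AdjOf a b Fix) (fun i => mv (a i) (l i)) (fun i => mv (b i) (r i)) where
  symm := fun i j h σ => ⟨(h σ).2.2.1, (h σ).2.2.2, (h σ).1, (h σ).2.1⟩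
  injL := H.injL
  injR := H.injR
  disj := H.disj
  LL := fun i j h g => mv_comm (by
      have := (hcomm i _ (h true).1).1
      exact this.symm)
    (fun σ => H.invl i _ (h σ).1) (fun σ => H.invl j _ (h σ).2.2.1) g
  LR := fun i j h g => mv_comm (by
      have := (hcomm i _ (h true).2.1).1
      exact this.symm)
    (fun σ => H.invl i _ (h σ).2.1) (fun σ => H.invr j _ (h σ).2.2.1) g
  RR := fun i j h g => mv_comm (by
      have := (hcomm i _ (h true).2.1).2
      exact this.symm)
    (fun σ => H.invr i _ (h σ).2.1) (fun σ => H.invr j _ (h σ).2.2.2) g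

end Str

theorem sft_of_rule {G S : Type} [Group G] (F0 : Finset G)
    (Q : G → G → S → S → S → S → Prop) :
    IsSFT {x : G → S | ∀ g, ∀ f ∈ F0, ∀ f' ∈ F0,
      Q f f' (x g) (x (g * f)) (x (g * f')) (x (g * f * f'))} := by
  classical
  refine ⟨insert 1 (F0 ∪ F0 * F0), {w | ∃ y : G → S, (∀ h, w h = y h) ∧
    ∀ f ∈ F0, ∀ f' ∈ F0, Q f f' (y 1) (y f) (y f') (y (f * f'))}, fun x => ?_⟩
  constructor
  · intro hx g
    refine ⟨fun h => x (g * h), fun h => rfl, fun f hf f' hf' => ?_⟩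
    have := hx g f hf f' hf'
    simpa [mul_assoc] using this
  · intro hx g f hf f' hf'
    obtain ⟨y, hy, hQ⟩ := hx g
    have h1 : ∀ h ∈ insert 1 (F0 ∪ F0 * F0), x (g * h) = y h := fun h hh => hy ⟨h, hh⟩
    have := hQ f hf f' hf'
    rw [← h1 1 (by simp), ← h1 f (by simp [hf]), ← h1 f' (by simp [hf']),
      ← h1 (f * f') (by
        simp only [Finset.mem_insert, Finset.mem_union]
        exact Or.inr (Or.inr (Finset.mul_mem_mul hf hf')))] at this
    simpa [mul_assoc] using this

/-- The local rules. -/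
structure Loc {I G Θ : Type} [Group G] {m : ℕ} (a b : I → G) (P : Finset G) (s : Fin m → G)
    (i1 : Fin m)
    (T : Set G) (Fix : I → G → Prop) (α β : I)
    (Sq : Θ → Θ → Θ → Θ → Prop) (Col : Θ → Θ → Prop)
    (Init : Option (Option (Fin m → Bool)) → Θ → Prop)
    (f f' : G) (A B C D : Sym I (P → Fin m → Bool) P Θ) : Prop where
  invl : ∀ i, Fix i f → B.l i = A.l i
  invr : ∀ i, Fix i f → B.r i = A.r i
  injL : ∀ i, f = sg (a i) (A.l i) → f' = f → D.l i ≠ !(A.l i)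
  injR : ∀ i, f = sg (b i) (A.r i) → f' = f → D.r i ≠ !(A.r i)
  disj : ∀ i, f = sg (a i) (A.l i) → ∀ σ, f' = sg (b i) (!σ) → D.r i ≠ σ
  du : ∀ i j, AdjOf a b Fix i j → f = sg (b j) (A.r j) → B.u i j = A.d i
  uu : ∀ i j, AdjOf a b Fix i j → f = sg (a j) (A.l j) → B.u i j = A.u i j
  dv : ∀ i j, AdjOf a b Fix i j → f = sg (b i) (A.r i) → B.v i j = A.d j
  vv : ∀ i j, AdjOf a b Fix i j → f = sg (a i) (A.l i) → B.v i j = A.v i j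
  del0 : ∀ i j, AdjOf a b Fix i j → f = sg (b j) (A.r j) → f' = sg (b i) (B.r i) →
    D.del i j = true
  delS : ∀ i j, AdjOf a b Fix i j → f = sg (a j) (A.l j) → f' = sg (a i) (B.l i) →
    A.del i j = true → D.del i j = true
  deq : ∀ i j, AdjOf a b Fix i j → A.del i j = true → A.u i j = A.v i j
  ltS : ∀ i j, AdjOf a b Fix i j → f = sg (a i) (A.l i) →
    (A.del i j = true ∨ A.lt i j = true) → B.lt i j = true
  gtS : ∀ i j, AdjOf a b Fix i j → f = sg (a j) (A.l j) →
    (A.del i j = true ∨ A.gt i j = true) → B.gt i j = true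
  iniLt : ∀ p, f = sg (b α) (A.r α) → A.lt α β = true → ∃ θ, B.tau p = some θ ∧
    Init (some (some (A.v α β p))) θ
  iniDel : ∀ p, f = sg (b α) (A.r α) → A.del α β = true → ∃ θ, B.tau p = some θ ∧
    Init (some none) θ
  iniGt : ∀ p, f = sg (b α) (A.r α) → A.gt α β = true → ∃ θ, B.tau p = some θ ∧ Init none θ
  sq : ∀ p, f = sg (a β) (A.l β) → f' = sg (a α) (A.l α) → ∀ a', A.tau p = some a' →
    ∃ b c d, B.tau p = some b ∧ C.tau p = some c ∧ D.tau p = some d ∧ Sq a' b c d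
  col : ∀ p, f = sg (b β) (A.r β) → f' = sg (a α) (B.l α) → ∀ a', B.tau p = some a' →
    ∃ c, D.tau p = some c ∧ Col a' c
  dat : ∀ i, f ∈ T → Fix i f → ∀ (p p' : P), (p : G) = 1 → (p' : G) = f⁻¹ → B.d i p = A.d i p'
  cons : ∀ i (p p' : P) k, (p' : G) = s k * p → A.d i p k = A.d i p' i1

section LocGood
variable {I G Θ : Type} [Group G] {m : ℕ} {a b : I → G} {P : Finset G} {s : Fin m → G}
    {i1 : Fin m} {T : Set G} {Fix : I → G → Prop} {α β : I}
    {Sq : Θ → Θ → Θ → Θ → Prop} {Col : Θ → Θ → Prop}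
    {Init : Option (Option (Fin m → Bool)) → Θ → Prop}

theorem str_of_loc (F0 : Finset G) (hFix : ∀ i f, Fix i f → f ∈ F0)
    (hA : ∀ i σ, sg (a i) σ ∈ F0) (hB : ∀ i σ, sg (b i) σ ∈ F0)
    (x : G → Sym I (P → Fin m → Bool) P Θ)
    (hx : ∀ g, ∀ f ∈ F0, ∀ f' ∈ F0, Loc a b P s i1 T Fix α β Sq Col Init f f'
      (x g) (x (g * f)) (x (g * f')) (x (g * f * f'))) :
    RayStr a b Fix (fun i g => (x g).l i) (fun i g => (x g).r i) where
  invl := fun i f h g => (hx g f (hFix i f h) f (hFix i f h)).invl i h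
  invr := fun i f h g => (hx g f (hFix i f h) f (hFix i f h)).invr i h
  injL := by
    intro i g h e
    simp only [mv] at e
    by_cases hs : (x h).l i = (x g).l i
    · rw [hs] at e; exact mul_right_cancel e
    · exfalso
      have hs' : (x h).l i = !((x g).l i) := Bool.eq_not.2 hs
      rw [hs', sg_not] at e
      have e2 : h = g * sg (a i) ((x g).l i) * sg (a i) ((x g).l i) := by
        rw [e, inv_mul_cancel_right]
      have := (hx g _ (hA i _) _ (hA i _)).injL i rfl rfl
      rw [← e2] at this
      exact this hs'
  injR := by
    intro i g h e
    simp only [mv] at e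
    by_cases hs : (x h).r i = (x g).r i
    · rw [hs] at e; exact mul_right_cancel e
    · exfalso
      have hs' : (x h).r i = !((x g).r i) := Bool.eq_not.2 hs
      rw [hs', sg_not] at e
      have e2 : h = g * sg (b i) ((x g).r i) * sg (b i) ((x g).r i) := by
        rw [e, inv_mul_cancel_right]
      have := (hx g _ (hB i _) _ (hB i _)).injR i rfl rfl
      rw [← e2] at this
      exact this hs'
  disj := by
    intro i g h e
    simp only [mv] at e
    have e2 : h = g * sg (a i) ((x g).l i) * sg (b i) (!(x h).r i) := by
      rw [e, sg_not, mul_inv_cancel_right]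
    have := (hx g _ (hA i _) _ (hB i (!(x h).r i))).disj i rfl ((x h).r i) rfl
    rw [← e2] at this
    exact this rfl

theorem good_of_loc (F0 : Finset G) (hT : ∀ t ∈ T, t ∈ F0) (hne : F0.Nonempty)
    (hA : ∀ i σ, sg (a i) σ ∈ F0) (hB : ∀ i σ, sg (b i) σ ∈ F0)
    (hαβ : AdjOf a b Fix α β)
    (x : G → Sym I (P → Fin m → Bool) P Θ)
    (H : RayStr a b Fix (fun i g => (x g).l i) (fun i g => (x g).r i))
    (hx : ∀ g, ∀ f ∈ F0, ∀ f' ∈ F0, Loc a b P s i1 T Fix α β Sq Col Init f f'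
      (x g) (x (g * f)) (x (g * f')) (x (g * f * f'))) :
    Good P s i1 (AdjOf a b Fix) T Fix α β Sq Col Init
      (fun i => mv (a i) (fun g => (x g).l i)) (fun i => mv (b i) (fun g => (x g).r i)) x where
  du := fun i j h g => (hx g _ (hB j _) _ (hB j true)).du i j h rfl
  uu := fun i j h g => (hx g _ (hA j _) _ (hB j true)).uu i j h rfl
  dv := fun i j h g => (hx g _ (hB i _) _ (hB j true)).dv i j h rfl
  vv := fun i j h g => (hx g _ (hA i _) _ (hB j true)).vv i j h rfl
  del0 := fun i j h g => (hx g _ (hB j _) _ (hB i _)).del0 i j h rfl rfl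
  delS := fun i j h g => (hx g _ (hA j _) _ (hA i _)).delS i j h rfl rfl
  deq := fun i j h g => (hx g _ (hA j true) _ (hA i true)).deq i j h
  ltS := fun i j h g => (hx g _ (hA i _) _ (hB j true)).ltS i j h rfl
  gtS := fun i j h g => (hx g _ (hA j _) _ (hB j true)).gtS i j h rfl
  iniLt := fun p g => (hx g _ (hB α _) _ (hB α true)).iniLt p rfl
  iniDel := fun p g => (hx g _ (hB α _) _ (hB α true)).iniDel p rfl
  iniGt := fun p g => (hx g _ (hB α _) _ (hB α true)).iniGt p rfl
  sq := by
    intro p g a' ha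
    obtain ⟨b', c, d, h1, h2, h3, h4⟩ :=
      (hx g _ (hA β ((x g).l β)) _ (hA α ((x g).l α))).sq p rfl rfl a' ha
    refine ⟨b', c, d, h1, h2, ?_, h4⟩
    simp only [mv]
    rw [H.invl α _ (hαβ _).1 g]
    exact h3
  col := fun p g => (hx g _ (hB β _) _ (hA α _)).col p rfl rfl
  dat := fun i t ht hf g => (hx g t (hT t ht) t (hT t ht)).dat i ht hf
  cons := by
    intro i g
    obtain ⟨f, hf⟩ := hne
    exact (hx g f hf f hf).cons i

theorem loc_of_good (hαβ : AdjOf a b Fix α β)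
    (x : G → Sym I (P → Fin m → Bool) P Θ)
    (H : RayStr a b Fix (fun i g => (x g).l i) (fun i g => (x g).r i))
    (X : Good P s i1 (AdjOf a b Fix) T Fix α β Sq Col Init
      (fun i => mv (a i) (fun g => (x g).l i)) (fun i => mv (b i) (fun g => (x g).r i)) x)
    (g f f' : G) : Loc a b P s i1 T Fix α β Sq Col Init f f'
      (x g) (x (g * f)) (x (g * f')) (x (g * f * f')) where
  invl := fun i h => H.invl i f h g
  invr := fun i h => H.invr i f h g
  injL := by
    rintro i rfl rfl h
    have e : mv (a i) (fun g => (x g).l i)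
        (g * sg (a i) ((x g).l i) * sg (a i) ((x g).l i)) =
        mv (a i) (fun g => (x g).l i) g := by
      simp only [mv]; rw [h, sg_not, mul_inv_cancel_right]
    have := H.injL i e
    rw [this] at h
    simp at h
  injR := by
    rintro i rfl rfl h
    have e : mv (b i) (fun g => (x g).r i)
        (g * sg (b i) ((x g).r i) * sg (b i) ((x g).r i)) =
        mv (b i) (fun g => (x g).r i) g := by
      simp only [mv]; rw [h, sg_not, mul_inv_cancel_right]
    have := H.injR i e
    rw [this] at h
    simp at h
  disj := by
    rintro i rfl σ rfl h
    refine H.disj i g (g * sg (a i) ((x g).l i) * sg (b i) !σ) ?_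
    simp only [mv]; rw [h, sg_not, inv_mul_cancel_right]
  du := by rintro i j h rfl; exact X.du i j h g
  uu := by rintro i j h rfl; exact X.uu i j h g
  dv := by rintro i j h rfl; exact X.dv i j h g
  vv := by rintro i j h rfl; exact X.vv i j h g
  del0 := by rintro i j h rfl rfl; exact X.del0 i j h g
  delS := by rintro i j h rfl rfl; exact X.delS i j h g
  deq := fun i j h => X.deq i j h g
  ltS := by rintro i j h rfl; exact X.ltS i j h g
  gtS := by rintro i j h rfl; exact X.gtS i j h g
  iniLt := by rintro p rfl; exact X.iniLt p g
  iniDel := by rintro p rfl; exact X.iniDel p g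
  iniGt := by rintro p rfl; exact X.iniGt p g
  sq := by
    rintro p rfl rfl a' ha
    obtain ⟨b', c, d, h1, h2, h3, h4⟩ := X.sq p g a' ha
    refine ⟨b', c, d, h1, h2, ?_, h4⟩
    simp only [mv] at h3
    rwa [H.invl α _ (hαβ _).1 g] at h3
  col := by rintro p rfl rfl; exact X.col p g
  dat := fun i ht hf => X.dat i f ht hf g
  cons := fun i => X.cons i g

end LocGood

theorem exists_connected {G : Type} [Group G] {m : ℕ} (s : Fin m → G)
    (hgen : Submonoid.closure (Set.range s) = ⊤) (T : Set G) (hT : T.Finite) :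
    ∃ P : Finset G, 1 ∈ P ∧ (∀ t ∈ T, t ∈ P) ∧ ∀ Pr : G → Prop, Pr 1 →
      (∀ p ∈ P, ∀ k, s k * p ∈ P → Pr p → Pr (s k * p)) → ∀ p ∈ P, Pr p := by
  classical
  have h1 : ∀ g : G, ∃ P : Finset G, 1 ∈ P ∧ g ∈ P ∧ ∀ Pr : G → Prop, Pr 1 →
      (∀ p ∈ P, ∀ k, s k * p ∈ P → Pr p → Pr (s k * p)) → ∀ p ∈ P, Pr p := by
    intro g
    have hg : g ∈ Submonoid.closure (Set.range s) := by rw [hgen]; trivial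
    induction hg using Submonoid.closure_induction_left with
    | one => exact ⟨{1}, by simp, by simp, fun Pr h _ p hp => by
        rw [Finset.mem_singleton] at hp; rw [hp]; exact h⟩
    | mul_left y hy g _ ih =>
      obtain ⟨k, rfl⟩ := hy
      obtain ⟨P, h1, h2, h3⟩ := ih
      refine ⟨insert (s k * g) P, by simp [h1], by simp, fun Pr hPr hs p hp => ?_⟩
      have hP : ∀ p ∈ P, Pr p := h3 Pr hPr fun p hp k hk h =>
        hs p (Finset.mem_insert_of_mem hp) k (Finset.mem_insert_of_mem hk) h
      rcases Finset.mem_insert.1 hp with rfl | hp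
      · exact hs g (Finset.mem_insert_of_mem h2) k (Finset.mem_insert_self _ _) (hP g h2)
      · exact hP p hp
  choose P hP1 hP2 hP3 using h1
  refine ⟨insert 1 (hT.toFinset.biUnion P), by simp, fun t ht => ?_, fun Pr hPr hs p hp => ?_⟩
  · exact Finset.mem_insert_of_mem (Finset.mem_biUnion.2 ⟨t, hT.mem_toFinset.2 ht, hP2 t⟩)
  · rcases Finset.mem_insert.1 hp with rfl | hp
    · exact hPr
    · obtain ⟨t, ht, htp⟩ := Finset.mem_biUnion.1 hp
      have hsub : ∀ q ∈ P t, q ∈ insert 1 (hT.toFinset.biUnion P) := fun q hq =>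
        Finset.mem_insert_of_mem (Finset.mem_biUnion.2 ⟨t, ht, hq⟩)
      exact hP3 t Pr hPr (fun p hp k hk h => hs p (hsub _ hp) k (hsub _ hk) h) p htp

theorem mem_closed_of_initial {A : Type} [TopologicalSpace A] (Y : Set (ℕ → A)) (hY : IsClosed Y)
    (y : ℕ → A) (h : ∀ n, ¬ ∀ y' : ℕ → A, ExtendsWord y' (prefixW y n) → y' ∉ Y) : y ∈ Y := by
  push Not at h
  choose y' hy1 hy2 using h
  refine hY.mem_of_tendsto (f := y') (b := Filter.atTop) ?_ (Filter.Eventually.of_forall hy2)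
  rw [tendsto_pi_nhds]
  intro k
  refine tendsto_const_nhds.congr' ?_
  filter_upwards [Filter.eventually_gt_atTop k] with n hn
  have := hy1 n ⟨k, by simpa [prefixW] using hn⟩
  simp only [prefixW, List.get_eq_getElem, List.getElem_map, List.getElem_range] at this
  exact this.symm

theorem extends_prefixW {A : Type} (y : ℕ → A) (n : ℕ) : ExtendsWord y (prefixW y n) := by
  intro i
  rw [List.get_eq_getElem]
  simp only [prefixW, List.getElem_map, List.getElem_range]

end SelfSim

open scoped Pointwise
namespace SelfSim

section Ray
variable {I G : Type} [Group G] {a b : I → G}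

/-- Ray of a configuration. -/
def rp (a b : I → G) (l r : I → G → Bool) (i : I) (n : ℕ) (g : G) : G :=
  rayPt (fun i => mv (a i) (l i)) (fun i => mv (b i) (r i)) i n g

theorem rp_zero (l r : I → G → Bool) (i : I) (g : G) :
    rp a b l r i 0 g = g * sg (b i) (r i g) := rfl

theorem rp_succ (l r : I → G → Bool) (i : I) (n : ℕ) (g : G) :
    rp a b l r i (n+1) g = rp a b l r i n g * sg (a i) (l i (rp a b l r i n g)) :=
  rayPt_succ _ _ _

theorem rp_shift (l r : I → G → Bool) (i : I) (n : ℕ) (g h : G) :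
    rp a b (fun i x => l i (g⁻¹ * x)) (fun i x => r i (g⁻¹ * x)) i n (g * h) =
      g * rp a b l r i n h := by
  induction n with
  | zero => simp [rp_zero, mul_assoc]
  | succ n ih => rw [rp_succ, rp_succ, ih]; simp [mul_assoc]

theorem rp_fix {Fix : I → G → Prop}
    (hcomm : ∀ i f, Fix i f → Commute f (a i) ∧ Commute f (b i)) {l r : I → G → Bool}
    (H : RayStr a b Fix l r) (i : I) (f : G) (hf : Fix i f) (n : ℕ) (g : G) :
    rp a b l r i n (g * f) = rp a b l r i n g * f := by
  induction n with
  | zero => exact mv_mul (hcomm i f hf).2 (H.invr i f hf) g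
  | succ n ih =>
    rw [rp_succ, rp_succ, ih]
    exact mv_mul (hcomm i f hf).1 (H.invl i f hf) _

theorem rp_local {S : Type} [TopologicalSpace S] [DiscreteTopology S] (li ri : I → S → Bool)
    (i : I) (n : ℕ) (g : G) (x0 : G → S) :
    ∀ᶠ x in nhds x0, rp a b (fun i g => li i (x g)) (fun i g => ri i (x g)) i n g =
      rp a b (fun i g => li i (x0 g)) (fun i g => ri i (x0 g)) i n g := by
  have hloc : ∀ h : G, ∀ᶠ x in nhds x0, x h = x0 h := fun h =>
    (((continuous_apply (A := fun _ : G => S) h).continuousAt (x := x0)).eventually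
      (p := fun c => c = x0 h) (by
      rw [nhds_discrete]; exact Filter.eventually_pure.2 rfl))
  induction n with
  | zero =>
    filter_upwards [hloc g] with x hx
    rw [rp_zero, rp_zero, hx]
  | succ n ih =>
    filter_upwards [ih, hloc (rp a b (fun i g => li i (x0 g)) (fun i g => ri i (x0 g)) i n g)]
      with x hx hx'
    rw [rp_succ, rp_succ, hx, hx']

end Ray

section Core
variable {I G : Type} [Group G]

/-- consequence of the rules: the data describes the orbit -/
theorem orbit_of_good {Θ : Type} {m : ℕ} {a b : I → G} {P : Finset G} {s : Fin m → G}
    {i1 : Fin m} {T : Set G} {Fix : I → G → Prop} {α β : I}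
    {Sq : Θ → Θ → Θ → Θ → Prop} {Col : Θ → Θ → Prop}
    {Init : Option (Option (Fin m → Bool)) → Θ → Prop}
    (hcomm : ∀ i f, Fix i f → Commute f (a i) ∧ Commute f (b i))
    (hαβ : AdjOf a b Fix α β) (hconn : ∀ i j, Relation.ReflTransGen (AdjOf a b Fix) i j)
    (hTgen : Subgroup.closure T = ⊤) (hTfix : ∀ t ∈ T, ∃ i, Fix i t)
    (X : Set (ℕ → Bool)) (act : G → (ℕ → Bool) → ℕ → Bool) (hact : IsActionOn act X)
    (hi1 : s i1 = 1)
    (hYc : IsClosed (SetRep s act X))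
    (htile : ∀ w, (∃ θ, ValidTiling Sq Col Init (fun k => (w.map some ++ [none])[k]?) θ) ↔
      ¬ ∀ y : ℕ → Fin m → Bool, ExtendsWord y w → y ∉ SetRep s act X)
    (h1 : (1 : G) ∈ P) (hTP : ∀ t ∈ T, t⁻¹ ∈ P)
    (hP : ∀ Pr : G → Prop, Pr 1 →
      (∀ p ∈ P, ∀ k, s k * p ∈ P → Pr p → Pr (s k * p)) → ∀ p ∈ P, Pr p)
    (x : G → Sym I (P → Fin m → Bool) P Θ)
    (H : RayStr a b Fix (fun i g => (x g).l i) (fun i g => (x g).r i))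
    (XG : Good P s i1 (AdjOf a b Fix) T Fix α β Sq Col Init
      (fun i => mv (a i) (fun g => (x g).l i)) (fun i => mv (b i) (fun g => (x g).r i)) x)
    (g : G) :
    (fun n => (x (rp a b (fun i g => (x g).l i) (fun i g => (x g).r i) β n 1)).d β ⟨1, h1⟩ i1) ∈ X
    ∧ (fun n => (x (rp a b (fun i g => (x g).l i) (fun i g => (x g).r i) β n g)).d β ⟨1, h1⟩ i1) =
      act g⁻¹ (fun n => (x (rp a b (fun i g => (x g).l i) (fun i g => (x g).r i) β n 1)).d β
        ⟨1, h1⟩ i1) := by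
  set l : I → G → Bool := fun i g => (x g).l i with hl
  set r : I → G → Bool := fun i g => (x g).r i with hr
  have HM := H.maps hcomm
  obtain ⟨hX, hact1, hactm⟩ := hact
  set η : G → P → ℕ → Bool := fun g p n => (x (rp a b l r β n g)).d β p i1 with hη
  have hmem : ∀ g p, η g p ∈ X ∧ ∀ k, (fun n => (x (rp a b l r β n g)).d β p k) =
      act (s k) (η g p) := by
    intro g p
    have : (fun n => (x (rp a b l r β n g)).d β p) ∈ SetRep s act X := by
      refine mem_closed_of_initial _ hYc _ fun n => ?_
      rw [← htile]
      exact good_tiling HM XG hαβ p n g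
    obtain ⟨ξ, hξ, he⟩ := this
    have : η g p = ξ := by
      have := he i1
      rw [hi1, hact1 ξ hξ] at this
      exact this
    rw [this]
    exact ⟨hξ, he⟩
  have hp : ∀ g, ∀ p ∈ P, ∀ h : p ∈ P, η g ⟨p, h⟩ = act p (η g ⟨1, h1⟩) := by
    intro g
    refine hP _ (fun _ => (hact1 _ (hmem g _).1).symm) ?_
    intro p hp k hk ih h
    have e := (hmem g ⟨p, hp⟩).2 k
    rw [ih hp, ← hactm _ _ _ (hmem g _).1] at e
    rw [← e]
    funext n
    exact (XG.cons β _ ⟨p, hp⟩ ⟨s k * p, h⟩ k rfl).symm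
  have hT : ∀ t ∈ T, ∀ g, η (g * t) ⟨1, h1⟩ = act t⁻¹ (η g ⟨1, h1⟩) := by
    intro t ht g
    rw [← hp g _ (hTP t ht) (hTP t ht)]
    obtain ⟨i, hi⟩ := hTfix t ht
    funext n
    have e1 := good_z HM XG (hconn β i) n (g * t)
    have e2 := good_z HM XG (hconn β i) n g
    have e3 : (x (rp a b l r i n (g * t))).d i ⟨1, h1⟩ =
        (x (rp a b l r i n g)).d i ⟨t⁻¹, hTP t ht⟩ := by
      rw [rp_fix hcomm H i t hi]
      exact XG.dat i t ht hi _ _ _ rfl rfl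
    change (x (rp a b l r β n (g * t))).d β = (x (rp a b l r i n (g * t))).d i at e1
    change (x (rp a b l r β n g)).d β = (x (rp a b l r i n g)).d i at e2
    simp only [hη]
    rw [e1, e2, e3]
  refine ⟨(hmem 1 _).1, ?_⟩
  change η g ⟨1, h1⟩ = act g⁻¹ (η 1 ⟨1, h1⟩)
  have hg : g ∈ Subgroup.closure T := by rw [hTgen]; trivial
  induction hg using Subgroup.closure_induction_right with
  | one => rw [inv_one, hact1 _ (hmem 1 _).1]
  | mul_right x _ y hy ih =>
    rw [hT y hy, ih, ← hactm _ _ _ (hmem 1 _).1, mul_inv_rev]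
  | mul_inv_cancel x _ y hy ih =>
    have := hT y hy (x * y⁻¹)
    rw [inv_mul_cancel_right, ih] at this
    have h2 := congrArg (act y) this
    rw [← hactm _ _ _ (hmem 1 _).1, ← hactm _ _ _ (hmem _ _).1, mul_inv_cancel,
      hact1 _ (hmem _ _).1] at h2
    rw [← h2, mul_inv_rev, inv_inv]

theorem core_fin [Finite I] (a b : I → G) (Fix : I → G → Prop)
    (hcomm : ∀ i f, Fix i f → Commute f (a i) ∧ Commute f (b i))
    (l r : I → G → Bool) (H : RayStr a b Fix l r) (T : Set G) (hTfin : T.Finite)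
    (hTgen : Subgroup.closure T = ⊤) (hTfix : ∀ t ∈ T, ∃ i, Fix i t) (F0 : Finset G)
    (hFix : ∀ i f, Fix i f → f ∈ F0) (hT : ∀ t ∈ T, t ∈ F0)
    (hA : ∀ i σ, sg (a i) σ ∈ F0) (hB : ∀ i σ, sg (b i) σ ∈ F0)
    (α β : I) (hαβ : AdjOf a b Fix α β)
    (hconn : ∀ i j, Relation.ReflTransGen (AdjOf a b Fix) i j) : SelfSimulable G := by
  classical
  rintro X act ⟨m, s, hXc, hact, ⟨i1, hi1⟩, hgen, hYc, hYre⟩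
  obtain ⟨Θ, _, Sq, Col, Init, htile⟩ := tile_lemma _ hYre
  obtain ⟨P, h1, hTP, hP⟩ := exists_connected s hgen T⁻¹ hTfin.inv
  replace hTP : ∀ t ∈ T, t⁻¹ ∈ P := fun t ht => hTP _ (by simpa using ht)
  obtain ⟨k, ⟨e⟩⟩ := Finite.exists_equiv_fin (Sym I (P → Fin m → Bool) P Θ)
  let lf : I → Fin k → Bool := fun i c => (e.symm c).l i
  let rf : I → Fin k → Bool := fun i c => (e.symm c).r i
  let φ : (G → Fin k) → ℕ → Bool := fun y n =>
    (e.symm (y (rp a b (fun i g => lf i (y g)) (fun i g => rf i (y g)) β n 1))).d β ⟨1, h1⟩ i1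
  let Q : G → G → Fin k → Fin k → Fin k → Fin k → Prop := fun f f' A B C D =>
    Loc a b P s i1 T Fix α β Sq Col Init f f' (e.symm A) (e.symm B) (e.symm C) (e.symm D)
  have hne : F0.Nonempty := ⟨_, hA α true⟩
  have key : ∀ y : G → Fin k, (∀ g, ∀ f ∈ F0, ∀ f' ∈ F0,
      Q f f' (y g) (y (g * f)) (y (g * f')) (y (g * f * f'))) →
      ∀ g, φ y ∈ X ∧ (fun n => (e.symm (y (rp a b (fun i g => lf i (y g)) (fun i g => rf i (y g)) β
        n g))).d β ⟨1, h1⟩ i1) = act g⁻¹ (φ y) := by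
    intro y hy g
    have HS := str_of_loc (x := fun g => e.symm (y g)) F0 hFix hA hB hy
    have HG := good_of_loc (x := fun g => e.symm (y g)) F0 hT hne hA hB hαβ HS hy
    exact orbit_of_good hcomm hαβ hconn hTgen hTfix X act hact hi1 hYc htile h1 hTP hP
      (fun g => e.symm (y g)) HS HG g
  refine ⟨k, _, φ, sft_of_rule F0 Q, ?_, ?_, ?_, ?_⟩
  · refine Continuous.continuousOn ?_
    refine continuous_pi fun n => ?_
    rw [continuous_iff_continuousAt]
    intro y0
    have h2 := rp_local (a := a) (b := b) lf rf β n 1 y0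
    set q := rp a b (fun i g => lf i (y0 g)) (fun i g => rf i (y0 g)) β n 1 with hq
    have h3 : Continuous fun y : G → Fin k => (e.symm (y q)).d β ⟨1, h1⟩ i1 :=
      (continuous_of_discreteTopology (f := fun c : Fin k => (e.symm c).d β ⟨1, h1⟩ i1)).comp
        (continuous_apply q)
    refine h3.continuousAt.congr ?_
    filter_upwards [h2] with y hy
    simp only [φ]
    rw [hy]
  · intro y hy
    exact (key y hy 1).1
  · intro ξ hξ
    obtain ⟨hX, hact1, hactm⟩ := hact
    let z : G → ℕ → P → Fin m → Bool := fun g n p k => act (s k * p) (act g⁻¹ ξ) n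
    have hz : ∀ g (p : P), (fun n => z g n p) ∈ SetRep s act X := by
      intro g p
      refine ⟨act p (act g⁻¹ ξ), hX _ (hX _ hξ), fun i => ?_⟩
      rw [← hactm _ _ _ (hX _ hξ)]
    have hθ : ∀ g n (p : P), ∃ θ, ValidTiling Sq Col Init
        (fun k => ((prefixW (fun k => z g k p) n).map some ++ [none])[k]?) θ := by
      intro g n p
      rw [htile]
      intro h
      exact h _ (extends_prefixW _ n) (hz g p)
    choose θ hθ using hθ
    have HM := H.maps hcomm
    have HG := mkX_good (T := T) (Fix := Fix) (s := s) (i1 := i1) HM l r hαβ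
      (fun i t _ hf g => ⟨mv_mul (hcomm i t hf).1 (H.invl i t hf) g,
        mv_mul (hcomm i t hf).2 (H.invr i t hf) g⟩) z (by
        intro t ht g n p p' hp hp'
        funext k
        simp only [z, hp, hp', mul_inv_rev]
        rw [hactm _ _ _ hξ, mul_one, ← hactm (s k) _ _ (hX _ hξ)]) (by
        intro g n p p' k hp
        simp only [z, hp, hi1, one_mul]) θ hθ
    set x := mkX (fun i => mv (a i) (l i)) (fun i => mv (b i) (r i)) l r α β z θ with hx
    refine ⟨fun g => e (x g), ?_, ?_⟩
    · intro g f _ f' _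
      simp only [Q, Equiv.symm_apply_apply]
      exact loc_of_good hαβ x H HG g f f'
    · funext n
      simp only [φ, lf, rf, Equiv.symm_apply_apply]
      have := mkX_d_ray (α := α) (β := β) HM l r z θ β n 1
      change (mkX (fun i => mv (a i) (l i)) (fun i => mv (b i) (r i)) l r α β z θ
        (rp a b l r β n 1)).d β _ _ = _
      rw [show (mkX (fun i => mv (a i) (l i)) (fun i => mv (b i) (r i)) l r α β z θ
        (rp a b l r β n 1)).d β = z 1 n from this]
      simp only [z, hi1, inv_one, mul_one]
      rw [hact1 _ hξ, hact1 _ hξ]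
  · intro g y hy
    have h2 := (key y hy g⁻¹).2
    rw [inv_inv] at h2
    rw [← h2]
    funext n
    simp only [φ, shift]
    have h3 := rp_shift (a := a) (b := b) (fun i g => lf i (y g)) (fun i g => rf i (y g)) β n g g⁻¹
    rw [mul_inv_cancel] at h3
    rw [h3, inv_mul_cancel_left]

theorem core [Finite I] (a b : I → G) (Fix : I → G → Prop)
    (hcomm : ∀ i f, Fix i f → Commute f (a i) ∧ Commute f (b i))
    (l r : I → G → Bool) (H : RayStr a b Fix l r) (T : Set G) (hTfin : T.Finite)
    (hTgen : Subgroup.closure T = ⊤) (hTfix : ∀ t ∈ T, ∃ i, Fix i t)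
    (α β : I) (hαβ : AdjOf a b Fix α β)
    (hconn : ∀ i j, Relation.ReflTransGen (AdjOf a b Fix) i j) : SelfSimulable G := by
  classical
  have hfin : (T ∪ Set.range (fun q : I × Bool => sg (a q.1) q.2) ∪
      Set.range (fun q : I × Bool => sg (b q.1) q.2)).Finite :=
    (hTfin.union (Set.finite_range _)).union (Set.finite_range _)
  set F := T ∪ Set.range (fun q : I × Bool => sg (a q.1) q.2) ∪
      Set.range (fun q : I × Bool => sg (b q.1) q.2) with hF
  have hA : ∀ i σ, sg (a i) σ ∈ F := fun i σ => Or.inl (Or.inr ⟨(i, σ), rfl⟩)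
  have hB : ∀ i σ, sg (b i) σ ∈ F := fun i σ => Or.inr ⟨(i, σ), rfl⟩
  have hadj : ∀ i j, AdjOf a b Fix i j → AdjOf a b (fun i f => Fix i f ∧ f ∈ F) i j :=
    fun i j h σ => ⟨⟨(h σ).1, hA _ _⟩, ⟨(h σ).2.1, hB _ _⟩, ⟨(h σ).2.2.1, hA _ _⟩,
      ⟨(h σ).2.2.2, hB _ _⟩⟩
  refine core_fin a b (fun i f => Fix i f ∧ f ∈ F) (fun i f h => hcomm i f h.1) l r
    ⟨fun i f h => H.invl i f h.1, fun i f h => H.invr i f h.1, H.injL, H.injR, H.disj⟩ T hTfin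
    hTgen (fun t ht => ?_) hfin.toFinset (fun i f h => by simpa using h.2)
    (fun t ht => ?_) (fun i σ => ?_) (fun i σ => ?_) α β (hadj _ _ hαβ) ?_
  · obtain ⟨i, hi⟩ := hTfix t ht
    exact ⟨i, hi, Or.inl (Or.inl ht)⟩
  · rw [Set.Finite.mem_toFinset]; exact Or.inl (Or.inl ht)
  · rw [Set.Finite.mem_toFinset]; exact hA i σ
  · rw [Set.Finite.mem_toFinset]; exact hB i σ
  · intro i j
    exact Relation.ReflTransGen.mono hadj _ _ (hconn i j)

end Core
end SelfSim

open scoped Pointwise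
namespace SelfSim
namespace Nielsen
set_option linter.unusedSectionVars false
open FreeGroup

variable {α : Type} [DecidableEq α]

theorem list_decomp (L1 : List (α × Bool)) : ∀ L2 : List (α × Bool), IsReduced L1 → IsReduced L2 →
    ∃ A p B, L1 = A ++ invRev p ∧ L2 = p ++ B ∧ IsReduced (A ++ B) := by
  induction L1 using List.reverseRecOn with
  | nil => intro L2 _ h2; exact ⟨[], [], L2, rfl, rfl, h2⟩
  | append_singleton L x ih =>
    intro L2 h1 h2
    cases L2 with
    | nil => exact ⟨L ++ [x], [], [], by simp, rfl, by simpa using h1⟩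
    | cons y L2 =>
      by_cases hxy : x.1 = y.1 → x.2 = y.2
      · refine ⟨L ++ [x], [], y :: L2, by simp, rfl, ?_⟩
        unfold FreeGroup.IsReduced at *
        rw [List.isChain_append]
        refine ⟨h1, h2, ?_⟩
        intro a ha b hb
        simp at ha hb
        subst ha; subst hb
        exact hxy
      · push Not at hxy
        obtain ⟨A, p, B, e1, e2, e3⟩ := ih L2 (List.IsChain.left_of_append h1)
          (List.IsChain.right_of_append (l₁ := [y]) h2)
        refine ⟨A, y :: p, B, ?_, by simp [e2], e3⟩
        rw [invRev_cons, ← List.append_assoc, ← e1]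
        congr 1
        obtain ⟨x1, x2⟩ := x
        obtain ⟨y1, y2⟩ := y
        obtain ⟨h, h'⟩ := hxy
        simp only at h h'
        subst h
        have : x2 = !y2 := by cases x2 <;> cases y2 <;> simp_all
        simp [invRev, this]

theorem decomp (u v : FreeGroup α) : ∃ A p B, u.toWord = A ++ invRev p ∧ v.toWord = p ++ B ∧
    (u * v).toWord = A ++ B := by
  obtain ⟨A, p, B, e1, e2, e3⟩ := list_decomp u.toWord v.toWord isReduced_toWord isReduced_toWord
  refine ⟨A, p, B, e1, e2, ?_⟩
  have : u * v = mk (A ++ B) := by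
    rw [← mk_toWord (x := u), ← mk_toWord (x := v), e1, e2, ← mul_mk, ← mul_mk, ← mul_mk, ← inv_mk]
    group
  rw [this, toWord_mk, e3.reduce_eq]

theorem norm_def (u : FreeGroup α) : u.norm = u.toWord.length := rfl

theorem sq_norm (u : FreeGroup α) (hu : u ≠ 1) : u.norm < (u * u).norm := by
  obtain ⟨A, p, B, e1, e2, e3⟩ := decomp u u
  have l1 := congrArg List.length e1
  have l2 := congrArg List.length e2
  have l3 := congrArg List.length e3
  simp only [List.length_append, invRev_length] at l1 l2 l3
  rw [norm_def, norm_def]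
  by_contra hc
  apply hu
  have hA : A <+: p := by
    refine List.prefix_of_prefix_length_le (l₃ := u.toWord) ?_ ?_ (by omega)
    · rw [e1]; exact List.prefix_append _ _
    · rw [e2]; exact List.prefix_append _ _
  obtain ⟨D, rfl⟩ := hA
  have e4 : A ++ (invRev D ++ invRev A) = A ++ (D ++ B) := by
    rw [← List.append_assoc A D B, ← e2, e1, invRev_append]
  have e5 := List.append_cancel_left e4
  have e6 := List.append_inj_left e5 (by simp)
  have h1 : (mk D) ^ 2 = 1 := by
    rw [pow_two]; nth_rewrite 1 [← e6]
    rw [← inv_mk, inv_mul_cancel]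
  have h2 : (mk D : FreeGroup α) = 1 := by
    exact (pow_eq_one_iff_left (by norm_num)).1 h1
  rw [← mk_toWord (x := u), e1, invRev_append, ← mul_mk, ← mul_mk, ← inv_mk, ← inv_mk, h2, inv_one,
    one_mul, mul_inv_cancel]

/-- base-`K` value of a word -/
def val {K : ℕ} (code : α × Bool ≃ Fin K) (l : List (α × Bool)) : ℕ :=
  Nat.ofDigits K (l.map fun x => (code x : ℕ))

theorem val_append {K : ℕ} (code : α × Bool ≃ Fin K) (l l' : List (α × Bool)) :
    val code (l ++ l') = val code l + K ^ l.length * val code l' := by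
  simp [val, Nat.ofDigits_append]

theorem val_inj {K : ℕ} (code : α × Bool ≃ Fin K) : ∀ (l l' : List (α × Bool)),
    l.length = l'.length → val code l = val code l' → l = l'
  | [], [], _, _ => rfl
  | x :: l, y :: l', h, e => by
    simp only [val, List.map_cons, Nat.ofDigits_cons] at e
    have hx := (code x).2
    have hy := (code y).2
    have e1 := congrArg (· % K) e
    have e2 := congrArg (· / K) e
    have hK : 0 < K := by omega
    simp only [Nat.add_mul_mod_self_left, Nat.mod_eq_of_lt hx,
      Nat.mod_eq_of_lt hy] at e1
    rw [e1] at e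
    have e3 := Nat.eq_of_mul_eq_mul_left hK (Nat.add_left_cancel e)
    rw [code.injective (Fin.ext e1), val_inj code l l' (by simpa using h) e3]

/-- second measure -/
def m2 {K : ℕ} (code : α × Bool ≃ Fin K) (u : FreeGroup α) : ℕ :=
  val code (u.toWord.take ((u.norm + 1) / 2)) + val code ((u⁻¹).toWord.take ((u.norm + 1) / 2))

/-- the measure -/
def ms {K : ℕ} (code : α × Bool ≃ Fin K) (u : FreeGroup α) : ℕ ×ₗ ℕ :=
  toLex (u.norm, m2 code u)

theorem ms_inv {K : ℕ} (code : α × Bool ≃ Fin K) (u : FreeGroup α) : ms code u⁻¹ = ms code u := by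
  simp [ms, m2, norm_inv_eq, add_comm]

theorem ms_le {K : ℕ} {code : α × Bool ≃ Fin K} {u v : FreeGroup α} (h : ms code u ≤ ms code v) :
    u.norm ≤ v.norm ∧ (u.norm = v.norm → m2 code u ≤ m2 code v) := by
  rw [ms, ms, Prod.Lex.toLex_le_toLex] at h
  simp only at h
  refine ⟨by omega, fun e => by omega⟩

theorem m2_eq {K : ℕ} (code : α × Bool ≃ Fin K) (u : FreeGroup α) (p B : List (α × Bool))
    (hu : u.toWord = p ++ B) (h : p.length ≤ B.length) :
    m2 code u = val code p + K ^ p.length * val code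
      (B.take ((p.length + B.length + 1) / 2 - p.length)) +
      val code ((invRev B).take ((p.length + B.length + 1) / 2)) := by
  rw [m2, toWord_inv, norm_def, hu, invRev_append, List.length_append, List.take_append,
    List.take_append, List.take_of_length_le (by omega), val_append, invRev_length,
    Nat.sub_eq_zero_of_le (by omega : (p.length + B.length + 1) / 2 ≤ B.length)]
  simp

theorem le_of_ms {K : ℕ} (code : α × Bool ≃ Fin K) (u v : FreeGroup α) (p q B : List (α × Bool))
    (hu : u.toWord = q ++ B) (hv : v.toWord = p ++ B) (hpq : p.length = q.length)
    (h : q.length ≤ B.length) (hle : ms code u ≤ ms code v) : val code q ≤ val code p := by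
  have := (ms_le hle).2 (by rw [norm_def, norm_def, hu, hv]; simp [hpq])
  rw [m2_eq code u q B hu h, m2_eq code v p B hv (by omega), hpq] at this
  omega

/-- inverse letter -/
def il (v : α × Bool) : α × Bool := (v.1, !v.2)

/-- cancellation -/
def cn (u v : FreeGroup α) : ℕ := (u.norm + v.norm - (u * v).norm) / 2

theorem cn_eq {u v : FreeGroup α} {A p B : List (α × Bool)} (h1 : u.toWord = A ++ invRev p)
    (h2 : v.toWord = p ++ B) (h3 : (u * v).toWord = A ++ B) : cn u v = p.length := by
  rw [cn, norm_def, norm_def, norm_def, h1, h2, h3]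
  simp only [List.length_append, invRev_length]
  omega

/-- minimality of a basis -/
structure NMin {K : ℕ} (code : α × Bool ≃ Fin K) (U : α × Bool → FreeGroup α) : Prop where
  inv : ∀ v, U (il v) = (U v)⁻¹
  ne : ∀ v, U v ≠ 1
  min : ∀ z w, z.1 ≠ w.1 → ms code (U z) ≤ ms code (U w * U z)

section Min
variable {K : ℕ} {code : α × Bool ≃ Fin K} {U : α × Bool → FreeGroup α}

theorem eq_of_idx {v w : α × Bool} (h1 : v ≠ il w) (h2 : v ≠ w) : v.1 ≠ w.1 := by
  intro h
  obtain ⟨v1, v2⟩ := v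
  obtain ⟨w1, w2⟩ := w
  simp only at h
  subst h
  simp only [il, ne_eq, Prod.mk.injEq, true_and] at h1 h2
  cases v2 <;> cases w2 <;> simp_all

theorem norm_mul_ge (HM : NMin code U) (v w : α × Bool) (h : v ≠ il w) :
    (U v).norm ≤ (U v * U w).norm ∧ (U w).norm ≤ (U v * U w).norm := by
  by_cases hvw : v = w
  · subst hvw
    exact ⟨(sq_norm _ (HM.ne v)).le, (sq_norm _ (HM.ne v)).le⟩
  · have hi := eq_of_idx h hvw
    refine ⟨?_, (ms_le (HM.min w v (Ne.symm hi))).1⟩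
    have := (ms_le (HM.min (il v) (il w) hi)).1
    rw [HM.inv, HM.inv, ← mul_inv_rev, norm_inv_eq, norm_inv_eq] at this
    exact this

theorem cn_le (HM : NMin code U) (v w : α × Bool) (h : v ≠ il w) :
    2 * cn (U v) (U w) ≤ (U v).norm ∧ 2 * cn (U v) (U w) ≤ (U w).norm ∧
      (v = w → 2 * cn (U v) (U w) < (U w).norm) := by
  have h1 := norm_mul_ge HM v w h
  have h2 := norm_mul_le (U v) (U w)
  refine ⟨?_, ?_, ?_⟩
  · rw [cn]; omega
  · rw [cn]; omega
  · rintro rfl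
    have := sq_norm _ (HM.ne v)
    rw [cn]; omega

theorem cn_add (HM : NMin code U) (v w z : α × Bool) (h : v ≠ il w) (h' : w ≠ il z) :
    cn (U v) (U w) + cn (U w) (U z) < (U w).norm := by
  have h1 := cn_le HM v w h
  have h2 := cn_le HM w z h'
  by_contra hc
  have hvw : v ≠ w := fun e => by have := h1.2.2 e; omega
  have hwz : w ≠ z := fun e => by subst e; have := h2.2.2 rfl; omega
  have i1 := eq_of_idx h hvw
  have i2 := eq_of_idx h' hwz
  obtain ⟨A, p, B1, a1, a2, a3⟩ := decomp (U v) (U w)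
  obtain ⟨A2, q, B, b1, b2, b3⟩ := decomp (U w) (U z)
  have c1 := cn_eq a1 a2 a3
  have c2 := cn_eq b1 b2 b3
  rw [c1, norm_def, norm_def] at h1
  rw [c2, norm_def, norm_def] at h2
  rw [c1, c2, norm_def] at hc
  have l1 := congrArg List.length a1
  have l2 := congrArg List.length a2
  have l3 := congrArg List.length b1
  have l4 := congrArg List.length b2
  simp only [List.length_append, invRev_length] at l1 l2 l3 l4
  have e0 : p ++ B1 = A2 ++ invRev q := by rw [← a2, b1]
  have eA : p = A2 := List.append_inj_left e0 (by omega)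
  have eB : B1 = invRev q := List.append_inj_right e0 (by omega)
  subst eA; subst eB
  have k1 : val code q ≤ val code p :=
    le_of_ms code (U z) (U w * U z) p q B b2 b3 (by omega) (by omega) (HM.min z w (Ne.symm i2))
  have k2 : val code p ≤ val code q := by
    refine le_of_ms code (U v)⁻¹ (U v * U w)⁻¹ q p (invRev A) ?_ ?_ (by omega) ?_ ?_
    · rw [toWord_inv, a1, invRev_append, invRev_invRev]
    · rw [toWord_inv, a3, invRev_append, invRev_invRev]
    · rw [invRev_length]; omega
    · have := HM.min (il v) (il w) i1
      rwa [HM.inv, HM.inv, ← mul_inv_rev] at this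
  have hpq := val_inj code p q (by omega) (le_antisymm k2 k1)
  apply HM.ne w
  rw [← mk_toWord (x := U w), a2, hpq, ← mul_mk, ← inv_mk, mul_inv_cancel]

theorem prod_word (HM : NMin code U) (rest : List (α × Bool)) : ∀ v : α × Bool, IsReduced (v :: rest) →
    ∃ S M, S <+: (U v).toWord ∧ (∀ v', v' ≠ il v → cn (U v') (U v) < S.length) ∧
      (((v :: rest).map U).prod).toWord = S ++ M ∧ rest.length ≤ M.length := by
  induction rest with
  | nil =>
    intro v _
    refine ⟨(U v).toWord, [], List.prefix_rfl, fun v' hv' => ?_, by simp, le_rfl⟩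
    have := cn_le HM v' v hv'
    have h0 : 0 < (U v).norm := Nat.pos_of_ne_zero fun h => HM.ne v (norm_eq_zero.1 h)
    rw [norm_def] at h0
    rw [norm_def, norm_def] at this
    omega
  | cons v rest ih =>
    intro v' hred
    have hred' := hred
    rw [isReduced_cons_cons] at hred
    have hv' : v' ≠ il v := by
      rintro rfl
      have := hred.1 rfl
      simp [il] at this
    obtain ⟨S, M, h1, h2, h3, h4⟩ := ih v hred.2
    obtain ⟨A, p, B, a1, a2, a3⟩ := decomp (U v') (U v)
    have hc := cn_eq a1 a2 a3
    have hS := h2 v' hv'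
    rw [hc] at hS
    have hpS : p <+: S := by
      refine List.prefix_of_prefix_length_le (l₃ := (U v).toWord) ?_ h1 (by omega)
      rw [a2]; exact List.prefix_append _ _
    obtain ⟨B', rfl⟩ := hpS
    have hB' : B' <+: B := by
      rw [a2] at h1
      exact (List.prefix_append_right_inj p).1 h1
    obtain ⟨B'', rfl⟩ := hB'
    have hB'0 : B' ≠ [] := by rintro rfl; simp at hS
    have l1 := congrArg List.length a1
    simp only [List.length_append, invRev_length] at l1
    refine ⟨A, B' ++ M, ?_, fun v'' hv'' => ?_, ?_, ?_⟩
    · rw [a1]; exact List.prefix_append _ _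
    · have := cn_add HM v'' v' v hv'' hv'
      rw [hc, norm_def] at this
      omega
    · have hr1 : IsReduced (A ++ B') := by
        have : IsReduced (A ++ (B' ++ B'')) := by rw [← a3]; exact isReduced_toWord
        rw [← List.append_assoc] at this
        exact List.IsChain.left_of_append this
      have hr2 : IsReduced (B' ++ M) := by
        have : IsReduced (p ++ B' ++ M) := by rw [← h3]; exact isReduced_toWord
        rw [List.append_assoc] at this
        exact List.IsChain.right_of_append this
      have hr := hr1.append_overlap hr2 hB'0
      rw [List.map_cons, List.prod_cons]
      have : U v' * ((v :: rest).map U).prod = mk (A ++ B' ++ M) := by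
        rw [← mk_toWord (x := U v'), ← mk_toWord (x := ((v :: rest).map U).prod), a1, h3]
        simp only [← mul_mk, ← inv_mk]
        group
      rw [this, toWord_mk, hr.reduce_eq, List.append_assoc]
    · have := List.length_pos_iff.2 hB'0
      simp only [List.length_append, List.length_cons]
      omega

theorem norm_prod_ge (HM : NMin code U) (w : List (α × Bool)) (hw : IsReduced w) :
    w.length ≤ ((w.map U).prod).norm := by
  cases w with
  | nil => simp
  | cons v rest =>
    obtain ⟨S, M, h1, h2, h3, h4⟩ := prod_word HM rest v hw
    have := h2 v (by intro h; have := congrArg Prod.snd h; simp [il] at this)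
    rw [norm_def, h3]
    simp only [List.length_append, List.length_cons]
    omega

end Min
end Nielsen
end SelfSim

open scoped Pointwise
namespace SelfSim
namespace Nielsen
open FreeGroup hiding map_mul map_inv map_one
set_option linter.unusedSectionVars false

variable {α : Type} [DecidableEq α]

/-- right transvection as a homomorphism -/
def tvHom (i j : α) (ε : Bool) : FreeGroup α →* FreeGroup α :=
  FreeGroup.lift fun k => if k = i then of i * mk [(j, ε)] else of k

theorem mk_single (v : α × Bool) : (mk [v] : FreeGroup α) = if v.2 then of v.1 else (of v.1)⁻¹ := by
  obtain ⟨i, ε⟩ := v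
  cases ε <;> rfl

theorem mk_il (v : α × Bool) : (mk [il v] : FreeGroup α) = (mk [v])⁻¹ := by
  obtain ⟨i, ε⟩ := v
  cases ε <;> rfl

theorem tvHom_self (i j : α) (ε : Bool) : tvHom i j ε (of i) = of i * mk [(j, ε)] := by
  simp [tvHom]

theorem tvHom_ne (i j k : α) (ε : Bool) (h : k ≠ i) : tvHom i j ε (of k) = of k := by
  simp [tvHom, h]

theorem tvHom_ne' (i j k : α) (ε δ : Bool) (h : k ≠ i) : tvHom i j ε (mk [(k, δ)]) = mk [(k, δ)] := by
  rw [mk_single]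
  cases δ
  · simp [tvHom_ne _ _ _ _ h]
  · simp [tvHom_ne _ _ _ _ h]

theorem tvHom_comp (i j : α) (hij : i ≠ j) (ε : Bool) :
    (tvHom i j (!ε)).comp (tvHom i j ε) = MonoidHom.id _ := by
  ext k
  simp only [MonoidHom.comp_apply, MonoidHom.id_apply]
  by_cases h : k = i
  · subst h
    have := mk_il (j, ε)
    rw [il] at this
    rw [tvHom_self, map_mul, tvHom_self, tvHom_ne' _ _ _ _ _ hij.symm, this, inv_mul_cancel_right]
  · rw [tvHom_ne _ _ _ _ h, tvHom_ne _ _ _ _ h]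

/-- right transvection -/
def tv (i j : α) (hij : i ≠ j) : MulAut (FreeGroup α) :=
  MonoidHom.toMulEquiv (tvHom i j true) (tvHom i j false)
    (tvHom_comp i j hij true) (tvHom_comp i j hij false)

theorem tv_apply (i j : α) (hij : i ≠ j) (g : FreeGroup α) : tv i j hij g = tvHom i j true g := rfl

theorem tv_inv_apply (i j : α) (hij : i ≠ j) (g : FreeGroup α) :
    (tv i j hij)⁻¹ g = tvHom i j false g := rfl

/-- inversion as a homomorphism -/
def ivHom (i : α) : FreeGroup α →* FreeGroup α :=
  FreeGroup.lift fun k => if k = i then (of i)⁻¹ else of k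

theorem ivHom_self (i : α) : ivHom i (of i) = (of i)⁻¹ := by simp [ivHom]
theorem ivHom_ne (i k : α) (h : k ≠ i) : ivHom i (of k) = of k := by simp [ivHom, h]

theorem ivHom_comp (i : α) : (ivHom i).comp (ivHom i) = MonoidHom.id _ := by
  ext k
  simp only [MonoidHom.comp_apply, MonoidHom.id_apply]
  by_cases h : k = i
  · subst h
    rw [ivHom_self, map_inv, ivHom_self, inv_inv]
  · rw [ivHom_ne _ _ h, ivHom_ne _ _ h]

/-- inversion -/
def iv (i : α) : MulAut (FreeGroup α) :=
  MonoidHom.toMulEquiv (ivHom i) (ivHom i) (ivHom_comp i) (ivHom_comp i)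

theorem iv_self (i : α) : iv i (of i) = (of i)⁻¹ := ivHom_self i
theorem iv_ne (i k : α) (h : k ≠ i) : iv i (of k) = of k := ivHom_ne i k h

/-- permutation automorphisms -/
def pm : Equiv.Perm α →* MulAut (FreeGroup α) where
  toFun σ := freeGroupCongr σ
  map_one' := freeGroupCongr_refl
  map_mul' σ τ := (freeGroupCongr_trans τ σ).symm

theorem pm_apply (σ : Equiv.Perm α) (k : α) : pm σ (of k) = of (σ k) := by
  simp [pm]

/-- Nielsen generators -/
def gens (α : Type) [DecidableEq α] : Set (MulAut (FreeGroup α)) :=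
  (Set.range fun p : α × α => pm (Equiv.swap p.1 p.2)) ∪ Set.range iv ∪
    Set.range fun p : {p : α × α // p.1 ≠ p.2} => tv p.1.1 p.1.2 p.2

theorem gens_finite [Finite α] : (gens α).Finite :=
  ((Set.finite_range _).union (Set.finite_range _)).union (Set.finite_range _)

theorem iv_mem (i : α) : iv i ∈ Subgroup.closure (gens α) :=
  Subgroup.subset_closure (Or.inl (Or.inr ⟨i, rfl⟩))

theorem tv_mem (i j : α) (h : i ≠ j) : tv i j h ∈ Subgroup.closure (gens α) :=
  Subgroup.subset_closure (Or.inr ⟨⟨(i, j), h⟩, rfl⟩)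

theorem pm_mem [Finite α] (σ : Equiv.Perm α) : pm σ ∈ Subgroup.closure (gens α) := by
  have h : (⊤ : Subgroup (Equiv.Perm α)) ≤ (Subgroup.closure (gens α)).comap pm := by
    rw [← Equiv.Perm.closure_isSwap, Subgroup.closure_le]
    rintro τ ⟨x, y, _, rfl⟩
    exact Subgroup.subset_closure (Or.inl (Or.inl ⟨(x, y), rfl⟩))
  exact h (Subgroup.mem_top σ)

theorem elem_false (i : α) (w : α × Bool) (h : i ≠ w.1) : ∃ e ∈ Subgroup.closure (gens α),
    e (of i)⁻¹ = mk [w] * (of i)⁻¹ ∧ ∀ k ≠ i, e (of k) = of k := by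
  obtain ⟨j, ε⟩ := w
  cases ε
  · refine ⟨tv i j h, tv_mem _ _ _, ?_, fun k hk => tvHom_ne _ _ _ _ hk⟩
    rw [map_inv, tv_apply, tvHom_self, mul_inv_rev, ← mk_il]; rfl
  · refine ⟨(tv i j h)⁻¹, inv_mem (tv_mem _ _ _), ?_, fun k hk => ?_⟩
    · rw [map_inv, tv_inv_apply, tvHom_self, mul_inv_rev, ← mk_il]; rfl
    · rw [tv_inv_apply]; exact tvHom_ne _ _ _ _ hk

theorem elem (z w : α × Bool) (h : z.1 ≠ w.1) : ∃ e ∈ Subgroup.closure (gens α),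
    e (mk [z]) = mk [w] * mk [z] ∧ ∀ k ≠ z.1, e (of k) = of k := by
  obtain ⟨i, ε⟩ := z
  obtain ⟨e, he, h1, h2⟩ := elem_false i w h
  cases ε
  · exact ⟨e, he, h1, h2⟩
  · refine ⟨iv i * e * iv i, mul_mem (mul_mem (iv_mem i) he) (iv_mem i), ?_, fun k hk => ?_⟩
    · have h3 : iv i (mk [w]) = mk [w] := by
        rw [mk_single]
        cases w.2
        · simp [iv_ne i _ (Ne.symm h)]
        · simp [iv_ne i _ (Ne.symm h)]
      change iv i (e (iv i (of i))) = mk [w] * of i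
      rw [iv_self, h1, map_mul, h3, map_inv, iv_self, inv_inv]
    · change iv i (e (iv i (of k))) = of k
      rw [iv_ne i k hk, h2 k hk, iv_ne i k hk]

theorem sign_mem (s : Finset α) : ∀ ψ : MulAut (FreeGroup α), (∀ k, ∃ ε, ψ (of k) = mk [(k, ε)]) →
    (∀ k, k ∉ s → ψ (of k) = of k) → ψ ∈ Subgroup.closure (gens α) := by
  induction s using Finset.induction_on with
  | empty =>
    intro ψ _ h
    have : ψ = 1 := by
      apply MulEquiv.toMonoidHom_injective
      ext k
      simpa using h k
    rw [this]; exact one_mem _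
  | insert j s hj ih =>
    intro ψ h1 h2
    obtain ⟨ε, hε⟩ := h1 j
    cases ε
    · have hε' : ψ (of j) = (of j)⁻¹ := hε
      have : ψ * iv j ∈ Subgroup.closure (gens α) := by
        apply ih
        · intro k
          by_cases hk : k = j
          · subst hk
            refine ⟨true, ?_⟩
            rw [MulAut.mul_apply, iv_self, map_inv, hε', inv_inv]; rfl
          · rw [MulAut.mul_apply, iv_ne j k hk]; exact h1 k
        · intro k hk
          by_cases hkj : k = j
          · subst hkj
            rw [MulAut.mul_apply, iv_self, map_inv, hε', inv_inv]
          · rw [MulAut.mul_apply, iv_ne j k hkj]; exact h2 k (by simp [hkj, hk])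
      have h3 := mul_mem this (inv_mem (iv_mem j))
      rwa [mul_inv_cancel_right] at h3
    · apply ih ψ h1
      intro k hk
      by_cases hkj : k = j
      · subst hkj; exact hε
      · exact h2 k (by simp [hkj, hk])

theorem signed_mem [Fintype α] (ψ : MulAut (FreeGroup α)) (h : ∀ k, ∃ v, ψ (of k) = mk [v]) :
    ψ ∈ Subgroup.closure (gens α) := by
  choose v hv using h
  have hinj : Function.Injective fun k => (v k).1 := by
    intro k l e
    simp only at e
    have h1 : ψ (of k) = ψ (of l) ∨ ψ (of k) = ψ ((of l)⁻¹) := by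
      rw [map_inv, hv, hv, ← mk_il]
      have : v k = v l ∨ v k = il (v l) := by
        by_contra hc
        push Not at hc
        exact eq_of_idx hc.2 hc.1 e
      rcases this with h | h
      · left; rw [h]
      · right; rw [h]
    rcases h1 with h1 | h1
    · exact of_injective (ψ.injective h1)
    · have h2 := congrArg toWord (ψ.injective h1)
      rw [toWord_inv, toWord_of, toWord_of] at h2
      simp [invRev] at h2
  let σ : Equiv.Perm α := Equiv.ofBijective _ (Finite.injective_iff_bijective.1 hinj)
  have hs : (pm σ)⁻¹ * ψ ∈ Subgroup.closure (gens α) := by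
    refine sign_mem Finset.univ _ (fun k => ⟨(v k).2, ?_⟩) (fun k hk => absurd (Finset.mem_univ k) hk)
    rw [MulAut.mul_apply, hv]
    have : (mk [v k] : FreeGroup α) = pm σ (mk [(k, (v k).2)]) := by
      rw [mk_single, mk_single]
      cases (v k).2
      · simp [pm_apply, σ]
      · simp [pm_apply, σ]
    rw [this]
    exact MulAut.inv_apply_self _ _ _
  have := mul_mem (pm_mem σ) hs
  rwa [mul_inv_cancel_left] at this

theorem map_mk_eq (φ : MulAut (FreeGroup α)) (l : List (α × Bool)) :
    φ (mk l) = (l.map fun v => φ (mk [v])).prod := by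
  induction l with
  | nil => exact map_one φ
  | cons v l ih =>
    rw [List.map_cons, List.prod_cons, ← ih, ← map_mul, mul_mk]; rfl

theorem closure_gens [Fintype α] : Subgroup.closure (gens α) = ⊤ := by
  rw [eq_top_iff]
  intro φ _
  let code : α × Bool ≃ Fin (Fintype.card (α × Bool)) := Fintype.equivFin _
  let meas : MulAut (FreeGroup α) → ℕ ×ₗ ℕ := fun ψ => ∑ k, ms code (ψ (of k))
  obtain ⟨φ', ⟨e0, he0, rfl⟩, hmin⟩ := (InvImage.wf meas (wellFounded_lt)).has_min
    {ψ | ∃ e ∈ Subgroup.closure (gens α), ψ = φ * e} ⟨φ, 1, one_mem _, by simp⟩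
  set φ' := φ * e0 with hφ'
  have hms : ∀ (ψ : MulAut (FreeGroup α)) (v : α × Bool), ms code (ψ (mk [v])) = ms code (ψ (of v.1)) := by
    intro ψ v
    rw [mk_single]
    cases v.2
    · simp [ms_inv]
    · simp
  have HM : NMin code (fun v => φ' (mk [v])) := by
    refine ⟨fun v => by rw [mk_il, map_inv], fun v h => ?_, fun z w hzw => ?_⟩
    · have h1 := (map_eq_one_iff φ' φ'.injective).1 h
      have h2 := congrArg toWord h1
      rw [toWord_mk, toWord_one] at h2
      simp at h2
    · by_contra hc
      rw [not_le] at hc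
      obtain ⟨e, he, h1, h2⟩ := elem z w hzw
      refine hmin (φ' * e) ⟨e0 * e, mul_mem he0 he, by rw [hφ', mul_assoc]⟩ ?_
      refine Finset.sum_lt_sum (fun k _ => ?_) ⟨z.1, Finset.mem_univ _, ?_⟩
      · by_cases hk : k = z.1
        · subst hk
          rw [← hms, ← hms, MulAut.mul_apply, h1, map_mul]
          exact hc.le
        · rw [MulAut.mul_apply, h2 k hk]
      · rw [← hms, ← hms, MulAut.mul_apply, h1, map_mul]
        exact hc
  have hnorm : ∀ g : FreeGroup α, g.norm ≤ (φ' g).norm := by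
    intro g
    have := norm_prod_ge HM g.toWord isReduced_toWord
    rwa [← map_mk_eq, mk_toWord] at this
  have hinv : φ'⁻¹ ∈ Subgroup.closure (gens α) := by
    apply signed_mem
    intro k
    have h1 := hnorm (φ'⁻¹ (of k))
    rw [MulAut.apply_inv_self, norm_of] at h1
    have h2 : φ'⁻¹ (of k) ≠ 1 := by
      intro h
      have := (map_eq_one_iff _ (φ'⁻¹).injective).1 h
      exact of_ne_one k this
    have h3 : (φ'⁻¹ (of k)).toWord.length = 1 := by
      have : (φ'⁻¹ (of k)).norm ≠ 0 := fun h => h2 (norm_eq_zero.1 h)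
      rw [norm_def] at h1 this
      omega
    obtain ⟨v, hv⟩ := List.length_eq_one_iff.1 h3
    exact ⟨v, by rw [← hv, mk_toWord]⟩
  have h1 := inv_mem hinv
  rw [inv_inv, hφ'] at h1
  have h2 := mul_mem h1 (inv_mem he0)
  rwa [mul_inv_cancel_right] at h2

end Nielsen
end SelfSim

open scoped Pointwise
namespace SelfSim
namespace Nielsen
open FreeGroup hiding map_mul map_inv map_one

/-- ordered pairs of distinct indices -/
abbrev Pr (n : ℕ) : Type := {p : Fin n × Fin n // p.1 ≠ p.2}

/-- first generator attached to a pair -/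
def ga {n : ℕ} (p : Pr n) : MulAut (FreeGroup (Fin n)) := tv p.1.1 p.1.2 p.2
/-- second generator attached to a pair -/
def gb {n : ℕ} (p : Pr n) : MulAut (FreeGroup (Fin n)) := tv p.1.2 p.1.1 p.2.symm

theorem ga_fst {n : ℕ} (p : Pr n) : ga p (of p.1.1) = of p.1.1 * of p.1.2 := tvHom_self _ _ _
theorem ga_ne {n : ℕ} (p : Pr n) (k : Fin n) (h : k ≠ p.1.1) : ga p (of k) = of k :=
  tvHom_ne _ _ _ _ h
theorem gb_snd {n : ℕ} (p : Pr n) : gb p (of p.1.2) = of p.1.2 * of p.1.1 := tvHom_self _ _ _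
theorem gb_ne {n : ℕ} (p : Pr n) (k : Fin n) (h : k ≠ p.1.2) : gb p (of k) = of k :=
  tvHom_ne _ _ _ _ h

/-- fixing condition on automorphisms -/
structure FixA {n : ℕ} (p : Pr n) (f : MulAut (FreeGroup (Fin n))) : Prop where
  h1 : f (of p.1.1) = of p.1.1
  h2 : f (of p.1.2) = of p.1.2
  ca : Commute f (ga p)
  cb : Commute f (gb p)

theorem FixA.mul {n : ℕ} {p : Pr n} {f f' : MulAut (FreeGroup (Fin n))} (h : FixA p f)
    (h' : FixA p f') : FixA p (f * f') :=
  ⟨by rw [MulAut.mul_apply, h'.h1, h.h1], by rw [MulAut.mul_apply, h'.h2, h.h2],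
    h.ca.mul_left h'.ca, h.cb.mul_left h'.cb⟩

theorem FixA.inv {n : ℕ} {p : Pr n} {f : MulAut (FreeGroup (Fin n))} (h : FixA p f) :
    FixA p f⁻¹ := by
  refine ⟨?_, ?_, h.ca.inv_left, h.cb.inv_left⟩
  · conv_lhs => rw [← h.h1]
    exact MulAut.inv_apply_self _ _ _
  · conv_lhs => rw [← h.h2]
    exact MulAut.inv_apply_self _ _ _

theorem fix_closure {α : Type} (S : Set α) (t : MulAut (FreeGroup α)) (h : ∀ k ∈ S, t (of k) = of k)
    (x : FreeGroup α) (hx : x ∈ Subgroup.closure (Set.image of S)) : t x = x := by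
  induction hx using Subgroup.closure_induction with
  | mem x hx => obtain ⟨k, hk, rfl⟩ := hx; exact h k hk
  | one => exact map_one t
  | mul x y _ _ h1 h2 => rw [map_mul, h1, h2]
  | inv x _ h1 => rw [map_inv, h1]

theorem aut_ext {α : Type} {f g : MulAut (FreeGroup α)} (h : ∀ k, f (of k) = g (of k)) : f = g := by
  apply MulEquiv.toMonoidHom_injective
  ext k
  exact h k

theorem fixA_of_supp {n : ℕ} (p : Pr n) (f : MulAut (FreeGroup (Fin n))) (S : Set (Fin n))
    (h1 : ∀ k, k ∉ S → f (of k) = of k)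
    (h2 : ∀ k ∈ S, f (of k) ∈ Subgroup.closure (Set.image of S)) (hp : p.1.1 ∉ S) (hp' : p.1.2 ∉ S) :
    FixA p f := by
  refine ⟨h1 _ hp, h1 _ hp', ?_, ?_⟩
  · refine aut_ext fun k => ?_
    rw [MulAut.mul_apply, MulAut.mul_apply]
    by_cases hk : k ∈ S
    · rw [ga_ne p k (by rintro rfl; exact hp hk)]
      refine (fix_closure S (ga p) (fun k hk => ga_ne p k ?_) _ (h2 k hk)).symm
      rintro rfl; exact hp hk
    · rw [h1 k hk]
      by_cases hk1 : k = p.1.1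
      · rw [hk1, ga_fst, map_mul, h1 _ hp, h1 _ hp']
      · rw [ga_ne p k hk1, h1 k hk]
  · refine aut_ext fun k => ?_
    rw [MulAut.mul_apply, MulAut.mul_apply]
    by_cases hk : k ∈ S
    · rw [gb_ne p k (by rintro rfl; exact hp' hk)]
      refine (fix_closure S (gb p) (fun k hk => gb_ne p k ?_) _ (h2 k hk)).symm
      rintro rfl; exact hp' hk
    · rw [h1 k hk]
      by_cases hk1 : k = p.1.2
      · rw [hk1, gb_snd, map_mul, h1 _ hp, h1 _ hp']
      · rw [gb_ne p k hk1, h1 k hk]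

theorem of_mem_cl {α : Type} {S : Set α} {k : α} (h : k ∈ S) :
    of k ∈ Subgroup.closure (Set.image of S) := Subgroup.subset_closure ⟨k, h, rfl⟩

theorem fixA_tv {n : ℕ} (p : Pr n) (i j : Fin n) (h : i ≠ j) (h1 : p.1.1 ≠ i) (h2 : p.1.1 ≠ j)
    (h3 : p.1.2 ≠ i) (h4 : p.1.2 ≠ j) : FixA p (tv i j h) := by
  refine fixA_of_supp p _ {i, j} (fun k hk => tvHom_ne _ _ _ _ ?_) (fun k hk => ?_) ?_ ?_
  · rintro rfl; simp at hk
  · have hi : (of i : FreeGroup (Fin n)) ∈ Subgroup.closure (Set.image of {i, j}) := of_mem_cl (by simp)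
    have hj : (of j : FreeGroup (Fin n)) ∈ Subgroup.closure (Set.image of {i, j}) := of_mem_cl (by simp)
    rw [tv_apply]
    rcases hk with rfl | rfl
    · rw [tvHom_self]; exact mul_mem hi hj
    · rw [tvHom_ne _ _ _ _ (Ne.symm h)]; exact hj
  · simp [h1, h2]
  · simp [h3, h4]

theorem fixA_gens {n : ℕ} (t : MulAut (FreeGroup (Fin n))) (ht : t ∈ gens (Fin n)) :
    ∃ i j : Fin n, ∀ p : Pr n, p.1.1 ≠ i → p.1.1 ≠ j → p.1.2 ≠ i → p.1.2 ≠ j → FixA p t := by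
  rcases ht with (⟨⟨i, j⟩, rfl⟩ | ⟨i, rfl⟩) | ⟨⟨⟨i, j⟩, h⟩, rfl⟩
  · refine ⟨i, j, fun p h1 h2 h3 h4 => ?_⟩
    refine fixA_of_supp p _ {i, j} (fun k hk => ?_) (fun k hk => ?_) (by simp [h1, h2])
      (by simp [h3, h4])
    · simp only [Set.mem_insert_iff, Set.mem_singleton_iff, not_or] at hk
      rw [pm_apply, Equiv.swap_apply_of_ne_of_ne hk.1 hk.2]
    · rw [pm_apply]
      apply of_mem_cl
      rcases hk with rfl | rfl <;> simp
  · refine ⟨i, i, fun p h1 h2 h3 h4 => ?_⟩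
    refine fixA_of_supp p _ {i} (fun k hk => iv_ne _ _ ?_) (fun k hk => ?_) (by simp [h1])
      (by simp [h3])
    · rintro rfl; simp at hk
    · rw [Set.mem_singleton_iff] at hk
      subst hk
      rw [iv_self]
      exact inv_mem (of_mem_cl rfl)
  · exact ⟨i, j, fun p h1 h2 h3 h4 => fixA_tv p i j h h1 h2 h3 h4⟩

theorem exists_pair {n : ℕ} (hn : 5 ≤ n) (x y z : Fin n) : ∃ p : Pr n,
    (p.1.1 ≠ x ∧ p.1.1 ≠ y ∧ p.1.1 ≠ z) ∧ (p.1.2 ≠ x ∧ p.1.2 ≠ y ∧ p.1.2 ≠ z) := by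
  have h1 : ({x, y, z} : Finset (Fin n)).card ≤ 3 := Finset.card_le_three
  have h2 : 1 < (({x, y, z} : Finset (Fin n))ᶜ).card := by
    rw [Finset.card_compl, Fintype.card_fin]; omega
  obtain ⟨u, hu, v, hv, huv⟩ := Finset.one_lt_card.1 h2
  simp only [Finset.mem_compl, Finset.mem_insert, Finset.mem_singleton, not_or] at hu hv
  exact ⟨⟨(u, v), huv⟩, hu, hv⟩

/-- slope below `-1` -/
def AM (p q : ℤ) : Prop := p * q < 0 ∧ q * q < p * p
/-- slope at least `1` -/
def AP (p q : ℤ) : Prop := 0 ≤ p * q ∧ q * q ≤ p * p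
/-- slope in `[-1,0)` -/
def BM (p q : ℤ) : Prop := p * q < 0 ∧ p * p ≤ q * q
/-- slope in `[0,1)` -/
def BP (p q : ℤ) : Prop := 0 ≤ p * q ∧ p * p < q * q

theorem AP_of (p q : ℤ) (h : ¬ AM p q) : AP (p + 2 * q) q := by
  unfold AM at h
  unfold AP
  by_cases h1 : 0 ≤ p * q
  · constructor <;> nlinarith [mul_self_nonneg q, mul_self_nonneg p]
  · have h2 : p * p ≤ q * q := by
      by_contra hc
      exact h ⟨by linarith, by linarith⟩
    have h3 : 0 ≤ (p + q) * q := by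
      by_contra hc
      push Not at hc
      nlinarith [mul_self_nonneg (p + q)]
    constructor
    · nlinarith [mul_self_nonneg q]
    · nlinarith [mul_self_nonneg (p + q)]

theorem AM_of (p q : ℤ) (h : AM p q) : AM (p - 2 * q) q := by
  unfold AM at *
  constructor <;> nlinarith [mul_self_nonneg q]

theorem BP_of (p q : ℤ) (h0 : p ≠ 0 ∨ q ≠ 0) (h : ¬ BM p q) : BP p (q + 2 * p) := by
  unfold BM at h
  unfold BP
  by_cases h1 : 0 ≤ p * q
  · have h2 : 0 < p * p + q * q := by
      rcases h0 with h0 | h0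
      · nlinarith [mul_self_pos.2 h0, mul_self_nonneg q]
      · nlinarith [mul_self_pos.2 h0, mul_self_nonneg p]
    constructor <;> nlinarith [mul_self_nonneg q, mul_self_nonneg p]
  · have h2 : q * q < p * p := by
      by_contra hc
      exact h ⟨by linarith, by linarith⟩
    have h3 : 0 < (p + q) * p := by
      by_contra hc
      push Not at hc
      nlinarith [mul_self_nonneg (p + q)]
    constructor
    · nlinarith [mul_self_nonneg p]
    · nlinarith [mul_self_nonneg (p + q)]

theorem BM_of (p q : ℤ) (h : BM p q) : BM p (q - 2 * p) := by
  unfold BM at *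
  constructor <;> nlinarith [mul_self_nonneg p]

/-- sign coefficient -/
def cf (σ : Bool) : ℤ := if σ then 2 else -2

section Ray
variable {n : ℕ} {G : Type} [Group G] (π : MulAut (FreeGroup (Fin n)) →* G)
  (W : (FreeGroup (Fin n) →* Multiplicative ℤ) → G → Fin n → ℤ)

/-- compatibility of the weights -/
def WOk : Prop := Function.Surjective π ∧
  ∀ χ f k, W χ (π f) k = (χ (f (of k))).toAdd

/-- first shift element -/
def ea (p : Pr n) : G := π (ga p ^ 2)
/-- second shift element -/
def eb (p : Pr n) : G := π (gb p ^ 2)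

/-- fixing condition -/
def FixG (p : Pr n) (f : G) : Prop := ∃ f', π f' = f ∧ FixA p f'

open Classical in
/-- the chosen character -/
noncomputable def chi (p : Pr n) (g : G) : FreeGroup (Fin n) →* Multiplicative ℤ :=
  Classical.epsilon fun χ => W χ g p.1.1 ≠ 0 ∨ W χ g p.1.2 ≠ 0

variable {π W}

theorem W_ea (hW : WOk π W) (p : Pr n) (g : G) (σ : Bool) (χ) :
    W χ (g * sg (ea π p) σ) p.1.1 = W χ g p.1.1 + cf σ * W χ g p.1.2 ∧
    W χ (g * sg (ea π p) σ) p.1.2 = W χ g p.1.2 := by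
  obtain ⟨f, rfl⟩ := hW.1 g
  have h2 : ga p (of p.1.2) = of p.1.2 := ga_ne p _ p.2.symm
  have h2' : (ga p)⁻¹ (of p.1.2) = of p.1.2 := by
    conv_lhs => rw [← h2]
    exact MulAut.inv_apply_self _ _ _
  have h1' : (ga p)⁻¹ (of p.1.1) = of p.1.1 * (of p.1.2)⁻¹ := by
    have : of p.1.1 = ga p (of p.1.1 * (of p.1.2)⁻¹) := by
      rw [map_mul, map_inv, ga_fst, h2, mul_inv_cancel_right]
    conv_lhs => rw [this]
    exact MulAut.inv_apply_self _ _ _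
  cases σ
  · simp only [sg, ea, cf, Bool.false_eq_true, if_false]
    rw [← map_inv, ← map_mul, hW.2, hW.2, hW.2, hW.2, ← inv_pow, pow_two]
    simp only [MulAut.mul_apply, h1', h2', map_mul, map_inv, toAdd_mul, toAdd_inv]
    constructor
    · ring
    · trivial
  · simp only [sg, ea, cf, if_true]
    rw [← map_mul, hW.2, hW.2, hW.2, hW.2, pow_two]
    simp only [MulAut.mul_apply, ga_fst, h2, map_mul, toAdd_mul]
    constructor
    · ring
    · trivial

theorem W_eb (hW : WOk π W) (p : Pr n) (g : G) (σ : Bool) (χ) :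
    W χ (g * sg (eb π p) σ) p.1.2 = W χ g p.1.2 + cf σ * W χ g p.1.1 ∧
    W χ (g * sg (eb π p) σ) p.1.1 = W χ g p.1.1 :=
  W_ea hW ⟨(p.1.2, p.1.1), p.2.symm⟩ g σ χ

theorem W_fix (hW : WOk π W) (p : Pr n) (g f : G) (hf : FixG π p f) (χ) :
    W χ (g * f) p.1.1 = W χ g p.1.1 ∧ W χ (g * f) p.1.2 = W χ g p.1.2 := by
  obtain ⟨g, rfl⟩ := hW.1 g
  obtain ⟨f', rfl, hf⟩ := hf
  rw [← map_mul, hW.2, hW.2, hW.2, hW.2, MulAut.mul_apply, MulAut.mul_apply, hf.h1, hf.h2]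
  exact ⟨rfl, rfl⟩

theorem chi_congr (p : Pr n) (g h : G) (H : ∀ χ, (W χ g p.1.1 ≠ 0 ∨ W χ g p.1.2 ≠ 0) ↔
    (W χ h p.1.1 ≠ 0 ∨ W χ h p.1.2 ≠ 0)) : chi W p g = chi W p h := by
  unfold chi
  congr 1
  funext χ
  exact propext (H χ)

theorem cf_cases (σ : Bool) : cf σ = 2 ∨ cf σ = -2 := by cases σ <;> simp [cf]

theorem chi_ea (hW : WOk π W) (p : Pr n) (g : G) (σ : Bool) :
    chi W p (g * sg (ea π p) σ) = chi W p g := by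
  apply chi_congr
  intro χ
  rw [(W_ea hW p g σ χ).1, (W_ea hW p g σ χ).2]
  rcases cf_cases σ with h | h <;> rw [h] <;> omega

theorem chi_eb (hW : WOk π W) (p : Pr n) (g : G) (σ : Bool) :
    chi W p (g * sg (eb π p) σ) = chi W p g := by
  apply chi_congr
  intro χ
  rw [(W_eb hW p g σ χ).1, (W_eb hW p g σ χ).2]
  rcases cf_cases σ with h | h <;> rw [h] <;> omega

theorem chi_fix (hW : WOk π W) (p : Pr n) (g f : G) (hf : FixG π p f) :
    chi W p (g * f) = chi W p g := by
  apply chi_congr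
  intro χ
  rw [(W_fix hW p g f hf χ).1, (W_fix hW p g f hf χ).2]

theorem chi_spec (hW : WOk π W) (p : Pr n) (g : G) :
    W (chi W p g) g p.1.1 ≠ 0 ∨ W (chi W p g) g p.1.2 ≠ 0 := by
  refine Classical.epsilon_spec (p := fun χ => W χ g p.1.1 ≠ 0 ∨ W χ g p.1.2 ≠ 0) ?_
  obtain ⟨f, rfl⟩ := hW.1 g
  refine ⟨(FreeGroup.lift fun _ => Multiplicative.ofAdd 1).comp (f⁻¹).toMonoidHom, Or.inl ?_⟩
  rw [hW.2]
  simp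

variable (W)

/-- first coordinate -/
noncomputable def wp (p : Pr n) (g : G) : ℤ := W (chi W p g) g p.1.1
/-- second coordinate -/
noncomputable def wq (p : Pr n) (g : G) : ℤ := W (chi W p g) g p.1.2

open Classical in
/-- first direction -/
noncomputable def ld (p : Pr n) (g : G) : Bool := decide (¬ AM (wp W p g) (wq W p g))
open Classical in
/-- second direction -/
noncomputable def rd (p : Pr n) (g : G) : Bool := decide (¬ BM (wp W p g) (wq W p g))

variable {W}

theorem w_ea (hW : WOk π W) (p : Pr n) (g : G) (σ : Bool) :
    wp W p (g * sg (ea π p) σ) = wp W p g + cf σ * wq W p g ∧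
    wq W p (g * sg (ea π p) σ) = wq W p g := by
  unfold wp wq
  rw [chi_ea hW]
  exact W_ea hW p g σ _

theorem w_eb (hW : WOk π W) (p : Pr n) (g : G) (σ : Bool) :
    wq W p (g * sg (eb π p) σ) = wq W p g + cf σ * wp W p g ∧
    wp W p (g * sg (eb π p) σ) = wp W p g := by
  unfold wp wq
  rw [chi_eb hW]
  exact W_eb hW p g σ _

theorem ld_true (hW : WOk π W) (p : Pr n) (g : G) (h : ld W p g = true) :
    AP (wp W p (mv (ea π p) (ld W p) g)) (wq W p (mv (ea π p) (ld W p) g)) := by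
  unfold mv
  rw [(w_ea hW p g _).1, (w_ea hW p g _).2, h]
  apply AP_of
  simpa [ld] using h

theorem ld_false (hW : WOk π W) (p : Pr n) (g : G) (h : ld W p g = false) :
    AM (wp W p (mv (ea π p) (ld W p) g)) (wq W p (mv (ea π p) (ld W p) g)) := by
  unfold mv
  rw [(w_ea hW p g _).1, (w_ea hW p g _).2, h]
  have := AM_of (wp W p g) (wq W p g) (by simpa [ld] using h)
  simpa [cf, sub_eq_add_neg] using this

theorem rd_true (hW : WOk π W) (p : Pr n) (g : G) (h : rd W p g = true) :
    BP (wp W p (mv (eb π p) (rd W p) g)) (wq W p (mv (eb π p) (rd W p) g)) := by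
  unfold mv
  rw [(w_eb hW p g _).1, (w_eb hW p g _).2, h]
  have h' : ¬ BM (wp W p g) (wq W p g) := by simpa [rd] using h
  exact BP_of (wp W p g) (wq W p g) (chi_spec hW p g) h'

theorem rd_false (hW : WOk π W) (p : Pr n) (g : G) (h : rd W p g = false) :
    BM (wp W p (mv (eb π p) (rd W p) g)) (wq W p (mv (eb π p) (rd W p) g)) := by
  unfold mv
  rw [(w_eb hW p g _).1, (w_eb hW p g _).2, h]
  have := BM_of (wp W p g) (wq W p g) (by simpa [rd] using h)
  simpa [cf, sub_eq_add_neg] using this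

theorem rayStr (hW : WOk π W) : RayStr (ea π) (eb π) (FixG π) (ld W) (rd W) where
  invl := by
    intro p f hf g
    unfold ld wp wq
    rw [chi_fix hW p g f hf, (W_fix hW p g f hf _).1, (W_fix hW p g f hf _).2]
  invr := by
    intro p f hf g
    unfold rd wp wq
    rw [chi_fix hW p g f hf, (W_fix hW p g f hf _).1, (W_fix hW p g f hf _).2]
  injL := by
    intro p g h e
    by_cases hs : ld W p g = ld W p h
    · unfold mv at e
      rw [hs] at e
      exact mul_right_cancel e
    · exfalso
      cases hg : ld W p g
      · have hh : ld W p h = true := by rw [hg] at hs; simpa using Ne.symm hs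
        have h1 := ld_false hW p g hg
        have h2 := ld_true hW p h hh
        rw [e] at h1
        exact absurd h1.1 (not_lt.2 h2.1)
      · have hh : ld W p h = false := by rw [hg] at hs; simpa using Ne.symm hs
        have h1 := ld_true hW p g hg
        have h2 := ld_false hW p h hh
        rw [e] at h1
        exact absurd h2.1 (not_lt.2 h1.1)
  injR := by
    intro p g h e
    by_cases hs : rd W p g = rd W p h
    · unfold mv at e
      rw [hs] at e
      exact mul_right_cancel e
    · exfalso
      cases hg : rd W p g
      · have hh : rd W p h = true := by rw [hg] at hs; simpa using Ne.symm hs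
        have h1 := rd_false hW p g hg
        have h2 := rd_true hW p h hh
        rw [e] at h1
        exact absurd h1.1 (not_lt.2 h2.1)
      · have hh : rd W p h = false := by rw [hg] at hs; simpa using Ne.symm hs
        have h1 := rd_true hW p g hg
        have h2 := rd_false hW p h hh
        rw [e] at h1
        exact absurd h2.1 (not_lt.2 h1.1)
  disj := by
    intro p g h e
    cases hg : ld W p g <;> cases hh : rd W p h
    · have h1 := ld_false hW p g hg
      have h2 := rd_false hW p h hh
      rw [e] at h1
      exact absurd h1.2 (not_lt.2 h2.2)
    · have h1 := ld_false hW p g hg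
      have h2 := rd_true hW p h hh
      rw [e] at h1
      exact absurd h1.1 (not_lt.2 h2.1)
    · have h1 := ld_true hW p g hg
      have h2 := rd_false hW p h hh
      rw [e] at h1
      exact absurd h2.1 (not_lt.2 h1.1)
    · have h1 := ld_true hW p g hg
      have h2 := rd_true hW p h hh
      rw [e] at h1
      exact absurd h2.2 (not_lt.2 h1.2)

theorem fixG_sg (p : Pr n) (f : MulAut (FreeGroup (Fin n))) (h : FixA p f) (σ : Bool) :
    FixG π p (sg (π (f ^ 2)) σ) := by
  have h2 : FixA p (f ^ 2) := by rw [pow_two]; exact h.mul h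
  cases σ
  · exact ⟨(f ^ 2)⁻¹, by simp [sg], h2.inv⟩
  · exact ⟨f ^ 2, by simp [sg], h2⟩

theorem adj_of_disj (p q : Pr n) (h1 : p.1.1 ≠ q.1.1) (h2 : p.1.1 ≠ q.1.2) (h3 : p.1.2 ≠ q.1.1)
    (h4 : p.1.2 ≠ q.1.2) : AdjOf (ea π) (eb π) (FixG π) p q := fun σ =>
  ⟨fixG_sg p _ (fixA_tv p _ _ _ h1 h2 h3 h4) σ, fixG_sg p _ (fixA_tv p _ _ _ h2 h1 h4 h3) σ,
    fixG_sg q _ (fixA_tv q _ _ _ h1.symm h3.symm h2.symm h4.symm) σ,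
    fixG_sg q _ (fixA_tv q _ _ _ h3.symm h1.symm h4.symm h2.symm) σ⟩

theorem conn_of_common (p q r : Pr n)
    (hp : (r.1.1 ≠ p.1.1 ∧ r.1.1 ≠ p.1.2) ∧ (r.1.2 ≠ p.1.1 ∧ r.1.2 ≠ p.1.2))
    (hq : (r.1.1 ≠ q.1.1 ∧ r.1.1 ≠ q.1.2) ∧ (r.1.2 ≠ q.1.1 ∧ r.1.2 ≠ q.1.2)) :
    Relation.ReflTransGen (AdjOf (ea π) (eb π) (FixG π)) p q :=
  (Relation.ReflTransGen.single (adj_of_disj p r hp.1.1.symm hp.2.1.symm hp.1.2.symm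
    hp.2.2.symm)).tail (adj_of_disj r q hq.1.1 hq.1.2 hq.2.1 hq.2.2)

theorem conn (hn : 5 ≤ n) (p q : Pr n) :
    Relation.ReflTransGen (AdjOf (ea π) (eb π) (FixG π)) p q := by
  by_cases h1 : p.1.1 = q.1.1
  · obtain ⟨r, hr, hr'⟩ := exists_pair hn p.1.1 p.1.2 q.1.2
    refine conn_of_common p q r ⟨⟨hr.1, hr.2.1⟩, ⟨hr'.1, hr'.2.1⟩⟩ ?_
    rw [← h1]; exact ⟨⟨hr.1, hr.2.2⟩, ⟨hr'.1, hr'.2.2⟩⟩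
  by_cases h2 : p.1.1 = q.1.2
  · obtain ⟨r, hr, hr'⟩ := exists_pair hn p.1.1 p.1.2 q.1.1
    refine conn_of_common p q r ⟨⟨hr.1, hr.2.1⟩, ⟨hr'.1, hr'.2.1⟩⟩ ?_
    rw [← h2]; exact ⟨⟨hr.2.2, hr.1⟩, ⟨hr'.2.2, hr'.1⟩⟩
  by_cases h3 : p.1.2 = q.1.1
  · obtain ⟨r, hr, hr'⟩ := exists_pair hn p.1.1 p.1.2 q.1.2
    refine conn_of_common p q r ⟨⟨hr.1, hr.2.1⟩, ⟨hr'.1, hr'.2.1⟩⟩ ?_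
    rw [← h3]; exact ⟨⟨hr.2.1, hr.2.2⟩, ⟨hr'.2.1, hr'.2.2⟩⟩
  by_cases h4 : p.1.2 = q.1.2
  · obtain ⟨r, hr, hr'⟩ := exists_pair hn p.1.1 p.1.2 q.1.1
    refine conn_of_common p q r ⟨⟨hr.1, hr.2.1⟩, ⟨hr'.1, hr'.2.1⟩⟩ ?_
    rw [← h4]; exact ⟨⟨hr.2.2, hr.2.1⟩, ⟨hr'.2.2, hr'.2.1⟩⟩
  exact Relation.ReflTransGen.single (adj_of_disj p q h1 h2 h3 h4)

theorem closure_image (hπ : Function.Surjective π) :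
    Subgroup.closure (Set.image π (gens (Fin n))) = ⊤ := by
  rw [← MonoidHom.map_closure, closure_gens, ← MonoidHom.range_eq_map]
  exact MonoidHom.range_eq_top.2 hπ

theorem main_ss (hn : 5 ≤ n) (hW : WOk π W) : Group.FG G ∧ SelfSimulable G := by
  have hgen := closure_image hW.1
  have hfin : (Set.image π (gens (Fin n))).Finite := gens_finite.image _
  refine ⟨?_, ?_⟩
  · rw [Group.fg_iff]
    exact ⟨_, hgen, hfin⟩
  · obtain ⟨β, hβ, hβ'⟩ := exists_pair hn ⟨0, by omega⟩ ⟨1, by omega⟩ ⟨0, by omega⟩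
    let α : Pr n := ⟨(⟨0, by omega⟩, ⟨1, by omega⟩), by simp⟩
    refine core (ea π) (eb π) (FixG π) ?_ (ld W) (rd W) (rayStr hW) _ hfin hgen ?_ α β
      (adj_of_disj α β hβ.1.symm hβ'.1.symm hβ.2.1.symm hβ'.2.1.symm) (conn hn)
    · rintro p _ ⟨f, rfl, hf⟩
      exact ⟨(hf.ca.pow_right 2).map π, (hf.cb.pow_right 2).map π⟩
    · rintro _ ⟨t, ht, rfl⟩
      obtain ⟨i, j, h⟩ := fixA_gens t ht
      obtain ⟨p, hp, hp'⟩ := exists_pair hn i j i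
      exact ⟨p, t, rfl, h p hp.1 hp.2.1 hp'.1 hp'.2.1⟩

end Ray

theorem aut_main (n : ℕ) (hn : 5 ≤ n) :
    Group.FG (MulAut (FreeGroup (Fin n))) ∧ SelfSimulable (MulAut (FreeGroup (Fin n))) :=
  main_ss (π := MonoidHom.id _) (W := fun χ f k => (χ (f (of k))).toAdd) hn
    ⟨Function.surjective_id, fun _ _ _ => rfl⟩

theorem out_main (n : ℕ) (hn : 5 ≤ n)
    [(MulAut.conj : FreeGroup (Fin n) →* MulAut (FreeGroup (Fin n))).range.Normal] :
    Group.FG (MulAut (FreeGroup (Fin n)) ⧸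
          (MulAut.conj : FreeGroup (Fin n) →* MulAut (FreeGroup (Fin n))).range) ∧
      SelfSimulable (MulAut (FreeGroup (Fin n)) ⧸
          (MulAut.conj : FreeGroup (Fin n) →* MulAut (FreeGroup (Fin n))).range) := by
  refine main_ss (π := QuotientGroup.mk' _) (W := fun χ g k => (χ (Quotient.out g (of k))).toAdd) hn
    ⟨QuotientGroup.mk'_surjective _, fun χ f k => ?_⟩
  obtain ⟨⟨_, c, rfl⟩, hc⟩ := QuotientGroup.mk_out_eq_mul
    (MulAut.conj : FreeGroup (Fin n) →* MulAut (FreeGroup (Fin n))).range f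
  simp only [QuotientGroup.mk'_apply]
  rw [hc]
  simp [MulAut.mul_apply, MulAut.conj_apply]

end Nielsen
end SelfSim

namespace SelfSim

/-- For `n ≥ 5`, `Aut(F_n)` and `Out(F_n)` are finitely generated and
self-simulable, where `Out(F_n)` is the quotient of `Aut(F_n)` by the normal subgroup of
inner automorphisms. -/
theorem autFn_outFn_selfSimulable (n : ℕ) (hn : 5 ≤ n) :
    (Group.FG (MulAut (FreeGroup (Fin n))) ∧ SelfSimulable (MulAut (FreeGroup (Fin n)))) ∧
    (Group.FG
        (MulAut (FreeGroup (Fin n)) ⧸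
          (MulAut.conj : FreeGroup (Fin n) →* MulAut (FreeGroup (Fin n))).range) ∧
      SelfSimulable
        (MulAut (FreeGroup (Fin n)) ⧸
          (MulAut.conj : FreeGroup (Fin n) →* MulAut (FreeGroup (Fin n))).range)) := by
  exact ⟨Nielsen.aut_main n hn, Nielsen.out_main n hn⟩

end SelfSim
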